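/- Fix an integer d ≥ 2 and δ ∈ (0,1). Let a^{jk} : ℝ → ℝ (1 ≤ j,k ≤ d) be measurable functions of x¹ only, with a^{jk} = a^{kj} and δ|θ|² ≤ Σ_{j,k=1}^d a^{jk}(x¹) θ^j θ^k ≤ δ⁻¹|θ|² for all x¹ and θ ∈ ℝ^d. Set L₀u = u_t + Σ_{j,k} a^{jk}(x¹) u_{x^j x^k}. If h is smooth on Q_4, h ∈ L²(Q_4), and L₀h = 0 in Q_4, then sup_{Q_1} |h_{tt}| + Σ_{j=1}^d sup_{Q_1} |h_{t x^j}| + Σ_{j=1}^d Σ_{k=2}^d sup_{Q_1} |h_{t x^j x^k}| + Σ_{i,j=1}^d Σ_{k=2}^d sup_{Q_1} |h_{x^i x^j x^k}| ≤ N (∫_{Q_3} |h|² dx dt)^{1/2}, where N = N(d,δ). -/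

import Mathlib

open MeasureTheory

/-- Partial derivative in `t`. -/
noncomputable def pdt {d : ℕ} (u : ℝ × (Fin d → ℝ) → ℝ) : ℝ × (Fin d → ℝ) → ℝ :=
  fun p => fderiv ℝ u p (1, 0)

/-- Partial derivative in `x^j`. -/
noncomputable def pdx {d : ℕ} (j : Fin d) (u : ℝ × (Fin d → ℝ) → ℝ) :
    ℝ × (Fin d → ℝ) → ℝ :=
  fun p => fderiv ℝ u p (0, Pi.single j 1)

/-- Second partial derivative in `x^j, x^k`. -/
noncomputable def pdxx {d : ℕ} (j k : Fin d) (u : ℝ × (Fin d → ℝ) → ℝ) :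
    ℝ × (Fin d → ℝ) → ℝ :=
  pdx j (pdx k u)

/-- Open Euclidean ball `B_r ⊂ ℝ^d` centered at the origin. -/
def ballE (d : ℕ) (r : ℝ) : Set (Fin d → ℝ) := {x | ∑ j, (x j) ^ 2 < r ^ 2}

/-- Parabolic cylinder `Q_r = (0,r²) × B_r`. -/
def Qc (d : ℕ) (r : ℝ) : Set (ℝ × (Fin d → ℝ)) := Set.Ioo 0 (r ^ 2) ×ˢ ballE d r


namespace Core

/-- space-time -/
abbrev E (d : ℕ) := ℝ × (Fin d → ℝ)

/-- smooth -/
abbrev Sm {d : ℕ} (w : E d → ℝ) : Prop := ContDiff ℝ ((⊤ : ℕ∞) : WithTop ℕ∞) w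

/-- directional derivative -/
noncomputable def pd {d : ℕ} (v : E d) (u : E d → ℝ) : E d → ℝ := fun p => fderiv ℝ u p v

lemma pdt_eq {d : ℕ} (u : E d → ℝ) : pdt u = pd (1, 0) u := rfl
lemma pdx_eq {d : ℕ} (j : Fin d) (u : E d → ℝ) : pdx j u = pd (0, Pi.single j 1) u := rfl

variable {d : ℕ}

lemma Sm.diff {w : E d → ℝ} (h : Sm w) : Differentiable ℝ w := h.differentiable (by simp)

lemma Sm.pd {w : E d → ℝ} (h : Sm w) (v : E d) : Sm (pd v w) := by
  have : Sm (fun p => fderiv ℝ w p v) :=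
    (h.fderiv_right (m := ((⊤ : ℕ∞) : WithTop ℕ∞)) (by exact le_rfl)).clm_apply contDiff_const
  exact this

lemma Sm.pdt {w : E d → ℝ} (h : Sm w) : Sm (pdt w) := Sm.pd h _
lemma Sm.pdx {w : E d → ℝ} (h : Sm w) (j : Fin d) : Sm (pdx j w) := Sm.pd h _

lemma pd_comm {w : E d → ℝ} (h : Sm w) (u v : E d) : pd u (pd v w) = pd v (pd u w) := by
  ext p
  have h2 : Differentiable ℝ (fderiv ℝ w) :=
    (h.fderiv_right (m := ((⊤ : ℕ∞) : WithTop ℕ∞)) (by exact le_rfl)).differentiable (by simp)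
  have key : ∀ a b : E d, pd a (pd b w) p = fderiv ℝ (fderiv ℝ w) p a b := by
    intro a b
    have := (h2 p).hasFDerivAt.clm_apply (hasFDerivAt_const b p)
    show fderiv ℝ (fun q => fderiv ℝ w q b) p a = _
    rw [this.fderiv]; simp
  rw [key, key]
  have : IsSymmSndFDerivAt ℝ w p :=
    (h.contDiffAt).isSymmSndFDerivAt
      (by simp; exact WithTop.coe_le_coe.2 (le_top : (2 : ℕ∞) ≤ ⊤))
  exact this u v

lemma pd_mul {f g : E d → ℝ} (hf : Sm f) (hg : Sm g) (v p : E d) :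
    pd v (fun q => f q * g q) p = pd v f p * g p + f p * pd v g p := by
  unfold pd
  have := ((hf.diff p).hasFDerivAt.mul (hg.diff p).hasFDerivAt).fderiv
  have h2 : (fun q => f q * g q) = f * g := rfl
  rw [h2, this]
  simp; ring

lemma pd_pow {f : E d → ℝ} (hf : Sm f) (n : ℕ) (v p : E d) :
    pd v (fun q => f q ^ (n+1)) p = (n+1) * f p ^ n * pd v f p := by
  unfold pd
  have := ((hf.diff p).hasFDerivAt.pow (n+1)).fderiv
  rw [this]
  simp

lemma hasDerivAt_line {f : E d → ℝ} (hf : Sm f) (v p : E d) (s : ℝ) :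
    HasDerivAt (fun s : ℝ => f (p + s • v)) (pd v f (p + s • v)) s := by
  have h1 : HasDerivAt (fun s : ℝ => p + s • v) v s := by
    simpa using ((hasDerivAt_id s).smul_const v).const_add p
  exact (hf.diff (p + s • v)).hasFDerivAt.comp_hasDerivAt s h1

lemma pd_congr {f g : E d → ℝ} {p : E d} (v : E d) (h : f =ᶠ[nhds p] g) :
    pd v f =ᶠ[nhds p] pd v g := by
  filter_upwards [h.fderiv (𝕜 := ℝ)] with q hq
  unfold pd; rw [hq]

/-- the half space -/
def Dm (d : ℕ) : Set (E d) := Set.Ioi 0 ×ˢ Set.univ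

lemma meas_Dm : MeasurableSet (Dm d) := measurableSet_Ioi.prod MeasurableSet.univ

lemma integ {f G : E d → ℝ} {C : ℝ} (hf : Measurable f) (hC : ∀ p, |f p| ≤ C)
    (hG : Continuous G) (hc : HasCompactSupport G) :
    Integrable (fun p => f p * G p) := by
  refine (hG.integrable_of_hasCompactSupport hc).bdd_mul (c := C) hf.aestronglyMeasurable ?_
  exact Filter.Eventually.of_forall hC

lemma hcs_pd {G : E d → ℝ} (hc : HasCompactSupport G) (v : E d) : HasCompactSupport (pd v G) :=
  (hc.fderiv_apply (𝕜 := ℝ) v)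

lemma ibp_x {f G : E d → ℝ} {C : ℝ} {v : E d} (hf : Measurable f) (hC : ∀ p, |f p| ≤ C)
    (hv : v.1 = 0) (hinv : ∀ p (s : ℝ), f (p + s • v) = f p)
    (hG : Sm G) (hc : HasCompactSupport G) :
    ∫ p in Dm d, f p * pd v G p = 0 := by
  rw [← integral_indicator meas_Dm]
  set F : E d → ℝ := (Dm d).indicator f with hF
  have hFm : Measurable F := hf.indicator meas_Dm
  have hFC : ∀ p, |F p| ≤ C := by
    intro p
    by_cases hp : p ∈ Dm d
    · simp [hF, hp, hC p]
    · simp [hF, hp]; exact (abs_nonneg _).trans (hC p)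
  have e1 : ∀ p, (Dm d).indicator (fun p => f p * pd v G p) p = F p * pd v G p := by
    intro p
    by_cases hp : p ∈ Dm d <;> simp [hF, hp]
  simp_rw [e1]
  have hFi : ∀ p (s : ℝ), F (p + s • v) = F p := by
    intro p s
    have : (p + s • v ∈ Dm d) ↔ p ∈ Dm d := by simp [Dm, hv]
    by_cases hp : p ∈ Dm d
    · simp [hF, hp, this.2 hp, hinv]
    · simp [hF, hp, this]
  have : (volume : Measure (E d)).IsAddHaarMeasure := by
    rw [Measure.volume_eq_prod]; infer_instance
  have := integral_bilinear_hasLineDerivAt_right_eq_neg_left_of_integrable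
    (μ := (volume : Measure (E d))) (f := F) (f' := fun _ => 0) (g := G) (g' := pd v G) (v := v)
    (B := ContinuousLinearMap.mul ℝ ℝ) (by simp)
    (by simpa using integ hFm hFC (Sm.pd hG v).continuous (hcs_pd hc v))
    (by simpa using integ hFm hFC hG.continuous hc)
    (by
      intro x _
      have : (fun t : ℝ => F (x + t • v)) = fun _ => F x := by ext s; rw [hFi]
      unfold HasLineDerivAt
      rw [this]
      exact hasDerivAt_const _ _)
    (by
      intro x _
      exact (hG.diff x).hasFDerivAt.hasLineDerivAt v)
  simpa using this

lemma slice_cont {G : E d → ℝ} (hG : Continuous G) : Continuous (fun x => G (0, x)) := by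
  fun_prop

lemma slice_hcs {G : E d → ℝ} (hc : HasCompactSupport G) :
    HasCompactSupport (fun x => G (0, x)) := by
  refine HasCompactSupport.intro (K := Prod.snd '' (tsupport G)) (hc.image continuous_snd) ?_
  intro x hx
  by_contra h
  exact hx ⟨(0, x), subset_tsupport _ h, rfl⟩

lemma ibp_t {f : (Fin d → ℝ) → ℝ} {G : E d → ℝ} {C : ℝ} (hf : Measurable f)
    (hC : ∀ x, |f x| ≤ C) (hG : Sm G) (hc : HasCompactSupport G) :
    ∫ p in Dm d, f p.2 * pd (1, 0) G p = - ∫ x, f x * G (0, x) := by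
  have hi : Integrable (fun p : E d => f p.2 * pd (1, 0) G p) :=
    integ (hf.comp measurable_snd) (fun p => hC p.2) (Sm.pd hG _).continuous (hcs_pd hc _)
  unfold Dm
  rw [Measure.volume_eq_prod] at hi ⊢
  rw [← Measure.prod_restrict, integral_prod_symm, ← integral_neg]
  · simp only [Measure.restrict_univ]
    congr 1
    ext x
    have h1 : ∀ t : ℝ, HasDerivAt (fun t : ℝ => G (t, x)) (pd (1, 0) G (t, x)) t := by
      intro t
      have := hasDerivAt_line hG (1, 0) (0, x) t
      simpa using this
    rw [integral_const_mul]
    have h2 : HasCompactSupport (fun t : ℝ => G (t, x)) := by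
      refine HasCompactSupport.intro (K := Prod.fst '' (tsupport G)) (hc.image continuous_fst) ?_
      intro t ht
      by_contra h
      exact ht ⟨(t, x), subset_tsupport _ h, rfl⟩
    have h3 : ContDiff ℝ 1 (fun t : ℝ => G (t, x)) := by
      have : Sm G := hG
      exact (this.comp (contDiff_id.prodMk contDiff_const)).of_le (by exact_mod_cast le_top)
    have h4 := h2.integral_Ioi_deriv_eq h3 0
    have h5 : deriv (fun t : ℝ => G (t, x)) = fun t => pd (1, 0) G (t, x) := by
      ext t; exact (h1 t).deriv
    rw [h5] at h4
    rw [h4]; ring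
  · rw [Measure.prod_restrict]
    exact hi.integrableOn

end Core

namespace Core
variable {d : ℕ}

/-- coefficients -/
structure Coef (z : Fin d) (K : ℝ) (b : ℝ → ℝ) (c : ℝ → Fin d → Fin d → ℝ) : Prop where
  mb : Measurable b
  mc : ∀ j k, Measurable fun s => c s j k
  one : ∀ s, c s z z = 1
  symm : ∀ s j k, c s j k = c s k j
  bc : ∀ s j k, |c s j k| ≤ K
  bb : ∀ s, |b s| ≤ K
  lb : ∀ s, K⁻¹ ≤ b s
  ell : ∀ s (θ : Fin d → ℝ), K⁻¹ * ∑ j, θ j ^ 2 ≤ ∑ j, ∑ k, c s j k * θ j * θ k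

/-- smooth solutions -/
structure Sol (z : Fin d) (b : ℝ → ℝ) (c : ℝ → Fin d → Fin d → ℝ) (U : Set (E d))
    (w : E d → ℝ) : Prop where
  sm : Sm w
  eq : ∀ p ∈ U, b (p.2 z) * pdt w p + ∑ j, ∑ k, c (p.2 z) j k * pdxx j k w p = 0

/-- cutoff data -/
structure Cut (ζ : E d → ℝ) (r M : ℝ) : Prop where
  sm : Sm ζ
  hcs : HasCompactSupport ζ
  nn : ∀ p, 0 ≤ ζ p
  le1 : ∀ p, ζ p ≤ 1
  supp : ∀ p, ζ p ≠ 0 → ‖p‖ ≤ r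
  one : ∀ p, ‖p‖ ≤ r / 2 → ζ p = 1
  bt : ∀ p, |pdt ζ p| ≤ M
  bx : ∀ j p, |pdx j ζ p| ≤ M

lemma exists_cut (d : ℕ) {r : ℝ} (hr : 0 < r) : ∃ (ζ : E d → ℝ) (M : ℝ), Cut ζ r M := by
  let f : ContDiffBump (0 : E d) := ⟨r / 2, r, by positivity, by linarith⟩
  have hs : Sm (f : E d → ℝ) := f.contDiff
  have hb : ∃ M, ∀ p, ‖fderiv ℝ f p‖ ≤ M :=
    (hs.continuous_fderiv (by simp)).bounded_above_of_compact_support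
      (f.hasCompactSupport.fderiv (𝕜 := ℝ))
  obtain ⟨M, hM⟩ := hb
  refine ⟨f, M, hs, f.hasCompactSupport, f.nonneg', fun p => f.le_one, ?_, ?_, ?_, ?_⟩
  · intro p hp
    have : p ∈ Function.support f := hp
    rw [f.support_eq] at this
    exact (mem_ball_zero_iff.1 this).le
  · intro p hp
    exact f.one_of_mem_closedBall (by simpa using hp)
  · intro p
    have := (fderiv ℝ f p).le_of_opNorm_le (hM p) (1, 0)
    simpa [pdt] using this
  · intro j p
    have := (fderiv ℝ f p).le_of_opNorm_le (hM p) (0, Pi.single j 1)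
    simpa [pdx, Prod.norm_def, Pi.norm_single] using this

lemma Sol.pd {z : Fin d} {b : ℝ → ℝ} {c : ℝ → Fin d → Fin d → ℝ} {U : Set (E d)}
    {w : E d → ℝ} (hU : IsOpen U) (h : Sol z b c U w) {v : E d} (hv : v.2 z = 0) :
    Sol z b c U (pd v w) := by
  refine ⟨Sm.pd h.sm v, ?_⟩
  intro p hp
  have hd : HasDerivAt (fun s : ℝ => b (p.2 z) * pdt w (p + s • v)
      + ∑ j, ∑ k, c (p.2 z) j k * pdxx j k w (p + s • v))
      (b (p.2 z) * Core.pd v (pdt w) (p + (0:ℝ) • v)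
      + ∑ j, ∑ k, c (p.2 z) j k * Core.pd v (pdxx j k w) (p + (0:ℝ) • v)) 0 := by
    refine ((hasDerivAt_line (Sm.pdt h.sm) v p 0).const_mul _).add ?_
    refine HasDerivAt.fun_sum fun j _ => HasDerivAt.fun_sum fun k _ => ?_
    exact (hasDerivAt_line (Sm.pdx (Sm.pdx h.sm k) j) v p 0).const_mul _
  have he : (fun s : ℝ => b (p.2 z) * pdt w (p + s • v)
      + ∑ j, ∑ k, c (p.2 z) j k * pdxx j k w (p + s • v)) =ᶠ[nhds 0] fun _ => 0 := by
    have hcont : Continuous (fun s : ℝ => p + s • v) := by fun_prop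
    have : ∀ᶠ s : ℝ in nhds 0, p + s • v ∈ U := by
      apply hcont.continuousAt.eventually_mem
      simpa using hU.mem_nhds hp
    filter_upwards [this] with s hs
    have := h.eq _ hs
    simpa [hv] using this
  have h0 := (hd.congr_of_eventuallyEq he.symm).unique (hasDerivAt_const (0:ℝ) (0:ℝ))
  simp only [zero_smul, add_zero] at h0
  rw [← h0]
  have e1 : pdt (Core.pd v w) = Core.pd v (pdt w) := pd_comm h.sm _ _
  have e2 : ∀ j k, pdxx j k (Core.pd v w) = Core.pd v (pdxx j k w) := by
    intro j k
    show Core.pd _ (Core.pd _ (Core.pd v w)) = Core.pd v (Core.pd _ (Core.pd _ w))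
    rw [pd_comm h.sm _ v, pd_comm (Sm.pd h.sm _) _ v]
  simp only [e1, e2]

lemma Sol.dt {z : Fin d} {b : ℝ → ℝ} {c : ℝ → Fin d → Fin d → ℝ} {U : Set (E d)}
    {w : E d → ℝ} (hU : IsOpen U) (h : Sol z b c U w) : Sol z b c U (pdt w) :=
  h.pd hU (by simp)

lemma Sol.dx {z : Fin d} {b : ℝ → ℝ} {c : ℝ → Fin d → Fin d → ℝ} {U : Set (E d)}
    {w : E d → ℝ} (hU : IsOpen U) (h : Sol z b c U w) {k : Fin d} (hk : k ≠ z) :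
    Sol z b c U (pdx k w) :=
  h.pd hU (by simp [hk.symm])

/-- space-time weighted norm -/
noncomputable def II (ζ : E d → ℝ) (n : ℕ) (w : E d → ℝ) : ℝ :=
  ∫ p in Dm d, ζ p ^ (2 * n) * w p ^ 2

/-- slice weighted norm -/
noncomputable def JJ (ζ : E d → ℝ) (n : ℕ) (w : E d → ℝ) : ℝ :=
  ∫ x, ζ (0, x) ^ (2 * n) * w (0, x) ^ 2

lemma hcs_pow_mul {ζ : E d → ℝ} (hc : HasCompactSupport ζ) {n : ℕ} (hn : n ≠ 0) (f : E d → ℝ) :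
    HasCompactSupport (fun p => ζ p ^ n * f p) := by
  refine HasCompactSupport.intro hc ?_
  intro x hx
  simp [image_eq_zero_of_notMem_tsupport hx, hn]

lemma II_int {ζ : E d → ℝ} {r M : ℝ} (hζ : Cut ζ r M) {n : ℕ} (hn : n ≠ 0) {w : E d → ℝ}
    (hw : Sm w) : Integrable (fun p => ζ p ^ (2 * n) * w p ^ 2) := by
  refine Continuous.integrable_of_hasCompactSupport ?_ (hcs_pow_mul hζ.hcs (by omega) _)
  have := hζ.sm.continuous
  have := hw.continuous
  fun_prop

lemma II_nonneg {ζ : E d → ℝ} {n : ℕ} {w : E d → ℝ} : 0 ≤ II ζ n w :=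
  integral_nonneg fun p => mul_nonneg (by rw [pow_mul]; positivity) (sq_nonneg _)

lemma JJ_nonneg {ζ : E d → ℝ} {n : ℕ} {w : E d → ℝ} : 0 ≤ JJ ζ n w :=
  integral_nonneg fun p => mul_nonneg (by rw [pow_mul]; positivity) (sq_nonneg _)

lemma II_anti {ζ : E d → ℝ} {r M : ℝ} (hζ : Cut ζ r M) {n m : ℕ} (hn : n ≠ 0) (hm : n ≤ m)
    {w : E d → ℝ} (hw : Sm w) : II ζ m w ≤ II ζ n w := by
  refine integral_mono (II_int hζ (by omega) hw).integrableOn (II_int hζ hn hw).integrableOn ?_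
  intro p
  have := pow_le_pow_of_le_one (hζ.nn p) (hζ.le1 p) (show 2 * n ≤ 2 * m by omega)
  exact mul_le_mul_of_nonneg_right this (sq_nonneg _)

lemma JJ_anti {ζ : E d → ℝ} {r M : ℝ} (hζ : Cut ζ r M) {n m : ℕ} (hn : n ≠ 0) (hm : n ≤ m)
    {w : E d → ℝ} (hw : Sm w) : JJ ζ m w ≤ JJ ζ n w := by
  have key : ∀ k : ℕ, k ≠ 0 → Integrable (fun x : Fin d → ℝ => ζ (0, x) ^ (2 * k) * w (0, x) ^ 2) := by
    intro k hk
    refine Continuous.integrable_of_hasCompactSupport ?_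
      (slice_hcs (hcs_pow_mul hζ.hcs (n := 2 * k) (by omega) (fun p => w p ^ 2)))
    have := hζ.sm.continuous
    have := hw.continuous
    fun_prop
  refine integral_mono (key _ (by omega)) (key _ hn) ?_
  intro p
  have := pow_le_pow_of_le_one (hζ.nn (0, p)) (hζ.le1 (0, p)) (show 2 * n ≤ 2 * m by omega)
  exact mul_le_mul_of_nonneg_right this (sq_nonneg _)

lemma num_term {A ε T X Y : ℝ} (hε : 0 < ε) (hT : |T| ≤ A) :
    -(ε * Y ^ 2 + A ^ 2 / (4 * ε) * X ^ 2) ≤ T * X * Y := by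
  have h1 : T ^ 2 ≤ A ^ 2 := sq_le_sq' (by linarith [neg_abs_le T]) ((le_abs_self T).trans hT)
  have h2 : T ^ 2 / (4 * ε) * X ^ 2 ≤ A ^ 2 / (4 * ε) * X ^ 2 := by gcongr
  have h3 : 0 ≤ ε * (Y + T / (2 * ε) * X) ^ 2 := by positivity
  have h4 : ε * (Y + T / (2 * ε) * X) ^ 2 = ε * Y ^ 2 + T * X * Y + T ^ 2 / (4 * ε) * X ^ 2 := by
    field_simp; ring
  linarith

lemma num1 (d : ℕ) {K M : ℝ} (hK : 0 < K) (hM : 0 ≤ M) (n : ℕ) : ∃ C : ℝ, 0 ≤ C ∧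
    ∀ (Z W Wt B Zt : ℝ) (g Zx : Fin d → ℝ) (S c : Fin d → Fin d → ℝ)
      (α β : Fin d → Fin d → Fin d), 0 ≤ Z → Z ≤ 1 → |Zt| ≤ M → (∀ j, |Zx j| ≤ M) →
      (∀ j k, |c j k| ≤ K) → |B| ≤ K →
      (K⁻¹ * ∑ j, g j ^ 2 ≤ ∑ j, ∑ k, c j k * g j * g k) →
      (Z ≠ 0 → B * Wt + ∑ j, ∑ k, c j k * S j k = 0) →
      K⁻¹ / 2 * (∑ j, Z ^ (2 * n + 2) * g j ^ 2) ≤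
        (∑ j, ∑ k, c j k * (g j * g k * Z ^ (2 * n + 2) + W * S j k * Z ^ (2 * n + 2)
          + W * g (α j k) * ((2 * n + 2) * Z ^ (2 * n + 1) * Zx (β j k))))
        + 1 / 2 * (B * (2 * W * Wt * Z ^ (2 * n + 2) + W ^ 2 * ((2 * n + 2) * Z ^ (2 * n + 1) * Zt)))
        + C * (Z ^ (2 * n) * W ^ 2) := by
  set A : ℝ := K * (2 * n + 2) * M with hA
  have hA0 : 0 ≤ A := by positivity
  set ε : ℝ := K⁻¹ / (2 * ((d:ℝ) * d + 1)) with hε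
  have hε0 : 0 < ε := by positivity
  refine ⟨d * d * (A ^ 2 / (4 * ε)) + A, by positivity, ?_⟩
  intro Z W Wt B Zt g Zx S c α β hZ0 hZ1 hZt hZx hc hB hell heq
  have hT : ∀ x y : ℝ, |x| ≤ K → |y| ≤ M → |x * (2 * n + 2) * y| ≤ A := by
    intro x y hx hy
    rw [abs_mul, abs_mul, abs_of_nonneg (by positivity : (0:ℝ) ≤ 2 * n + 2), hA]
    gcongr
  set G := ∑ j, g j ^ 2 with hG
  have hterm : ∀ j k, -(ε * (Z ^ (2 * n + 2) * G) + A ^ 2 / (4 * ε) * (Z ^ (2 * n) * W ^ 2)) ≤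
      c j k * (W * g (α j k) * ((2 * n + 2) * Z ^ (2 * n + 1) * Zx (β j k))) := by
    intro j k
    have h := num_term (X := Z ^ n * W) (Y := Z ^ (n + 1) * g (α j k)) hε0
      (hT (c j k) (Zx (β j k)) (hc j k) (hZx _))
    have h1 : g (α j k) ^ 2 ≤ G :=
      Finset.single_le_sum (f := fun j => g j ^ 2) (fun i _ => sq_nonneg _) (Finset.mem_univ _)
    have h2 : Z ^ (2 * n + 2) * g (α j k) ^ 2 ≤ Z ^ (2 * n + 2) * G := by gcongr
    have h3 : ε * (Z ^ (n + 1) * g (α j k)) ^ 2 ≤ ε * (Z ^ (2 * n + 2) * G) := by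
      calc _ = ε * (Z ^ (2 * n + 2) * g (α j k) ^ 2) := by ring
        _ ≤ _ := by gcongr
    have h4 : (Z ^ n * W) ^ 2 = Z ^ (2 * n) * W ^ 2 := by ring
    rw [h4] at h
    have h5 : c j k * (2 * n + 2) * Zx (β j k) * (Z ^ n * W) * (Z ^ (n + 1) * g (α j k))
        = c j k * (W * g (α j k) * ((2 * n + 2) * Z ^ (2 * n + 1) * Zx (β j k))) := by ring
    linarith
  have hsum : -((d:ℝ) * d * (ε * (Z ^ (2 * n + 2) * G) + A ^ 2 / (4 * ε) * (Z ^ (2 * n) * W ^ 2))) ≤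
      ∑ j, ∑ k, c j k * (W * g (α j k) * ((2 * n + 2) * Z ^ (2 * n + 1) * Zx (β j k))) := by
    have := Finset.sum_le_sum (s := (Finset.univ : Finset (Fin d))) fun j _ =>
      Finset.sum_le_sum (s := (Finset.univ : Finset (Fin d))) fun k _ => hterm j k
    simp only [Finset.sum_const, Finset.card_univ, Fintype.card_fin, nsmul_eq_mul] at this
    linarith
  have htime : -(A * (Z ^ (2 * n) * W ^ 2)) ≤
      1 / 2 * (B * (W ^ 2 * ((2 * n + 2) * Z ^ (2 * n + 1) * Zt))) := by
    have h1 := (abs_le.1 (hT B Zt hB hZt)).1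
    have h2 : Z ^ (2 * n + 1) ≤ Z ^ (2 * n) := pow_le_pow_of_le_one hZ0 hZ1 (by omega)
    have h3 : 0 ≤ Z ^ (2 * n + 1) * W ^ 2 := by positivity
    have h4 : Z ^ (2 * n + 1) * W ^ 2 ≤ Z ^ (2 * n) * W ^ 2 := by gcongr
    have h5 := mul_le_mul_of_nonneg_right h1 h3
    have h6 := mul_le_mul_of_nonneg_left h4 hA0
    have h7 := mul_nonneg hA0 h3
    have h8 : B * (2 * n + 2) * Zt * (Z ^ (2 * n + 1) * W ^ 2)
      = B * (W ^ 2 * ((2 * n + 2) * Z ^ (2 * n + 1) * Zt)) := by ring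
    linarith
  have hmain : W * Z ^ (2 * n + 2) * (B * Wt + ∑ j, ∑ k, c j k * S j k) = 0 := by
    by_cases hZ : Z = 0
    · simp [hZ]
    · rw [heq hZ, mul_zero]
  have hell2 := mul_le_mul_of_nonneg_left hell (by positivity : 0 ≤ Z ^ (2 * n + 2))
  have hsplit : (∑ j, ∑ k, c j k * (g j * g k * Z ^ (2 * n + 2) + W * S j k * Z ^ (2 * n + 2)
          + W * g (α j k) * ((2 * n + 2) * Z ^ (2 * n + 1) * Zx (β j k))))
      = Z ^ (2 * n + 2) * (∑ j, ∑ k, c j k * g j * g k)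
        + W * Z ^ (2 * n + 2) * (∑ j, ∑ k, c j k * S j k)
        + ∑ j, ∑ k, c j k * (W * g (α j k) * ((2 * n + 2) * Z ^ (2 * n + 1) * Zx (β j k))) := by
    simp only [Finset.mul_sum, ← Finset.sum_add_distrib]
    refine Finset.sum_congr rfl fun j _ => Finset.sum_congr rfl fun k _ => ?_
    ring
  rw [hsplit, ← Finset.mul_sum, ← hG]
  have hε2 : (d:ℝ) * d * (ε * (Z ^ (2 * n + 2) * G)) ≤ K⁻¹ / 2 * (Z ^ (2 * n + 2) * G) := by
    have hG0 : 0 ≤ Z ^ (2 * n + 2) * G := by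
      have : 0 ≤ G := Finset.sum_nonneg fun _ _ => sq_nonneg _
      positivity
    have : (d:ℝ) * d * ε ≤ K⁻¹ / 2 := by
      rw [hε, mul_div_assoc', div_le_div_iff₀ (by positivity) (by positivity)]
      have : 0 < K⁻¹ := by positivity
      nlinarith
    calc _ = (d:ℝ) * d * ε * (Z ^ (2 * n + 2) * G) := by ring
      _ ≤ _ := by gcongr
  nlinarith [hmain, hsum, htime, hell2, hε2]

lemma num2 (d : ℕ) (z : Fin d) {K M : ℝ} (hK : 0 < K) (hM : 0 ≤ M) (n : ℕ) : ∃ C : ℝ, 0 ≤ C ∧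
    ∀ (Z Wt B Zt g gt Zxz : ℝ) (S c : Fin d → Fin d → ℝ),
      0 ≤ Z → Z ≤ 1 → |Zt| ≤ M → |Zxz| ≤ M →
      (∀ j k, |c j k| ≤ K) → K⁻¹ ≤ B → (∀ j k, c j k = c k j) → (∀ j k, S j k = S k j) →
      c z z = 1 →
      (Z ≠ 0 → B * Wt + ∑ j, ∑ k, c j k * S j k = 0) →
      K⁻¹ / 2 * (Z ^ (2 * n + 2) * Wt ^ 2) ≤
        - (S z z * Wt * Z ^ (2 * n + 2) + g * gt * Z ^ (2 * n + 2)
          + g * Wt * ((2 * n + 2) * Z ^ (2 * n + 1) * Zxz))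
        + 1 / 2 * (2 * g * gt * Z ^ (2 * n + 2) + g ^ 2 * ((2 * n + 2) * Z ^ (2 * n + 1) * Zt))
        + C * (Z ^ (2 * n) * g ^ 2 +
            ∑ j, ∑ k ∈ Finset.univ.filter (· ≠ z), Z ^ (2 * n + 2) * S j k ^ 2) := by
  set A : ℝ := (2 * n + 2) * M with hA
  have hA0 : 0 ≤ A := by positivity
  set ε : ℝ := K⁻¹ / (4 * ((d:ℝ) * d + 1)) with hε
  have hε0 : 0 < ε := by positivity
  set C1 := (2 * K) ^ 2 / (4 * ε) with hC1
  have hC10 : 0 ≤ C1 := by positivity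
  set C2 := A ^ 2 / (4 * (K⁻¹ / 4)) with hC2
  have hC20 : 0 ≤ C2 := by positivity
  refine ⟨C1 + C2 + A, by positivity, ?_⟩
  intro Z Wt B Zt g gt Zxz S c hZ0 hZ1 hZt hZxz hc hB hcs hSs hcz heq
  set Y := Z ^ (n + 1) * Wt with hY
  have hn2 : |(2 * (n:ℝ) + 2)| = 2 * n + 2 := abs_of_nonneg (by positivity)
  -- the off-diagonal sum
  have hsum0 : ∑ j, ∑ k, c j k * S j k = S z z +
      ∑ j, ∑ k ∈ Finset.univ.filter (· ≠ z), (if j = z then 2 else 1) * c j k * S j k := by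
    have e1 : ∀ j, ∑ k, c j k * S j k = c j z * S j z +
        ∑ k ∈ Finset.univ.filter (· ≠ z), c j k * S j k := by
      intro j
      rw [← Finset.add_sum_erase _ _ (Finset.mem_univ z)]
      congr 2
      ext k; simp
    simp only [e1, Finset.sum_add_distrib]
    rw [← Finset.add_sum_erase _ (fun j => c j z * S j z) (Finset.mem_univ z)]
    rw [← Finset.add_sum_erase _ (fun j => ∑ k ∈ Finset.univ.filter (· ≠ z), c j k * S j k)
        (Finset.mem_univ z)]
    rw [← Finset.add_sum_erase _ (fun j => ∑ k ∈ Finset.univ.filter (· ≠ z),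
      (if j = z then 2 else 1) * c j k * S j k) (Finset.mem_univ z)]
    have e2 : ∑ j ∈ Finset.univ.erase z, c j z * S j z
        = ∑ k ∈ Finset.univ.filter (· ≠ z), c z k * S z k := by
      have : Finset.univ.erase z = Finset.univ.filter (· ≠ z) := by ext k; simp
      rw [this]
      exact Finset.sum_congr rfl fun k _ => by rw [hcs k z, hSs k z]
    have e3 : ∑ j ∈ Finset.univ.erase z, ∑ k ∈ Finset.univ.filter (· ≠ z),
        (if j = z then 2 else 1) * c j k * S j k
        = ∑ j ∈ Finset.univ.erase z, ∑ k ∈ Finset.univ.filter (· ≠ z), c j k * S j k := by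
      refine Finset.sum_congr rfl fun j hj => Finset.sum_congr rfl fun k _ => ?_
      rw [if_neg (Finset.ne_of_mem_erase hj), one_mul]
    rw [e2, e3, hcz]
    simp only [if_true, mul_assoc, ← Finset.mul_sum]
    ring
  set R := ∑ j, ∑ k ∈ Finset.univ.filter (· ≠ z), (if j = z then 2 else 1) * c j k * S j k with hR
  have hmain : Wt * Z ^ (2 * n + 2) * (B * Wt + (S z z + R)) = 0 := by
    by_cases hZ : Z = 0
    · simp [hZ]
    · rw [← hsum0, heq hZ, mul_zero]
  have hterm : ∀ j k, -(((if j = z then 2 else 1) * c j k * S j k) * (Wt * Z ^ (2 * n + 2))) ≤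
      ε * Y ^ 2 + C1 * (Z ^ (2 * n + 2) * S j k ^ 2) := by
    intro j k
    have hT : |((if j = z then 2 else 1) * c j k)| ≤ 2 * K := by
      rw [abs_mul]
      have : |(if j = z then (2:ℝ) else 1)| ≤ 2 := by split_ifs <;> norm_num
      have := hc j k
      gcongr
    have h := num_term (X := Z ^ (n + 1) * S j k) (Y := Y) hε0 hT
    rw [← hC1] at h
    have e : ((if j = z then 2 else 1) * c j k) * (Z ^ (n + 1) * S j k) * Y
      = (((if j = z then 2 else 1) * c j k * S j k) * (Wt * Z ^ (2 * n + 2))) := by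
      rw [hY]; ring
    have e2 : (Z ^ (n + 1) * S j k) ^ 2 = Z ^ (2 * n + 2) * S j k ^ 2 := by ring
    rw [e, e2] at h
    linarith
  set Q := ∑ j, ∑ k ∈ Finset.univ.filter (· ≠ z), Z ^ (2 * n + 2) * S j k ^ 2 with hQ
  have hQ0 : 0 ≤ Q := Finset.sum_nonneg fun _ _ => Finset.sum_nonneg fun _ _ => by positivity
  have hRb : -(R * (Wt * Z ^ (2 * n + 2))) ≤ d * d * (ε * Y ^ 2) + C1 * Q := by
    calc -(R * (Wt * Z ^ (2 * n + 2))) = ∑ j, ∑ k ∈ Finset.univ.filter (· ≠ z),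
          -(((if j = z then 2 else 1) * c j k * S j k) * (Wt * Z ^ (2 * n + 2))) := by
          rw [hR]; simp only [Finset.sum_mul, Finset.sum_neg_distrib]
      _ ≤ ∑ j, ∑ k ∈ Finset.univ.filter (· ≠ z),
          (ε * Y ^ 2 + C1 * (Z ^ (2 * n + 2) * S j k ^ 2)) :=
          Finset.sum_le_sum fun j _ => Finset.sum_le_sum fun k _ => hterm j k
      _ = (∑ _j : Fin d, ∑ _k ∈ Finset.univ.filter (· ≠ z), ε * Y ^ 2) + C1 * Q := by
          rw [hQ]; simp only [Finset.sum_add_distrib, Finset.mul_sum]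
      _ ≤ (∑ _j : Fin d, ∑ _k : Fin d, ε * Y ^ 2) + C1 * Q := by
          gcongr
          exact Finset.subset_univ _
      _ = _ := by simp; ring
  have hε2 : (d:ℝ) * d * (ε * Y ^ 2) ≤ K⁻¹ / 4 * Y ^ 2 := by
    have : (d:ℝ) * d * ε ≤ K⁻¹ / 4 := by
      rw [hε, mul_div_assoc', div_le_div_iff₀ (by positivity) (by positivity)]
      have : 0 < K⁻¹ := by positivity
      nlinarith
    calc _ = (d:ℝ) * d * ε * Y ^ 2 := by ring
      _ ≤ _ := by gcongr
  have hx : -(K⁻¹ / 4 * Y ^ 2 + C2 * (Z ^ (2 * n) * g ^ 2)) ≤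
      -(g * Wt * ((2 * n + 2) * Z ^ (2 * n + 1) * Zxz)) := by
    have hT : |-((2 * n + 2) * Zxz)| ≤ A := by rw [abs_neg, abs_mul, hn2, hA]; gcongr
    have h := num_term (X := Z ^ n * g) (Y := Y) (by positivity : 0 < K⁻¹ / 4) hT
    have e : -((2 * n + 2) * Zxz) * (Z ^ n * g) * Y =
        -(g * Wt * ((2 * n + 2) * Z ^ (2 * n + 1) * Zxz)) := by
      rw [hY]; ring
    have e2 : (Z ^ n * g) ^ 2 = Z ^ (2 * n) * g ^ 2 := by ring
    rw [e, e2] at h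
    linarith
  have htime : -(A * (Z ^ (2 * n) * g ^ 2)) ≤
      1 / 2 * (g ^ 2 * ((2 * n + 2) * Z ^ (2 * n + 1) * Zt)) := by
    have hT : |(2 * n + 2) * Zt| ≤ A := by rw [abs_mul, hn2, hA]; gcongr
    have h1 := (abs_le.1 hT).1
    have h2 : Z ^ (2 * n + 1) ≤ Z ^ (2 * n) := pow_le_pow_of_le_one hZ0 hZ1 (by omega)
    have h3 : 0 ≤ Z ^ (2 * n + 1) * g ^ 2 := by positivity
    have h4 : Z ^ (2 * n + 1) * g ^ 2 ≤ Z ^ (2 * n) * g ^ 2 := by gcongr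
    have h5 := mul_le_mul_of_nonneg_right h1 h3
    have h6 := mul_le_mul_of_nonneg_left h4 hA0
    have h7 := mul_nonneg hA0 h3
    have h8 : (2 * n + 2) * Zt * (Z ^ (2 * n + 1) * g ^ 2)
      = (g ^ 2 * ((2 * n + 2) * Z ^ (2 * n + 1) * Zt)) := by ring
    linarith
  have hYe : Y ^ 2 = Z ^ (2 * n + 2) * Wt ^ 2 := by rw [hY]; ring
  have hBY : K⁻¹ * Y ^ 2 ≤ B * Y ^ 2 := by gcongr
  have hP : 0 ≤ Z ^ (2 * n) * g ^ 2 := by positivity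
  rw [← hYe]
  set P := Z ^ (2 * n) * g ^ 2 with hPd
  have hm2 : B * Y ^ 2 + S z z * Wt * Z ^ (2 * n + 2) + R * (Wt * Z ^ (2 * n + 2)) = 0 := by
    rw [hYe]; linear_combination hmain
  have h1 : 0 ≤ C1 * P := by positivity
  have h2 : 0 ≤ C2 * Q := by positivity
  have h3 : 0 ≤ A * Q := by positivity
  have e : (C1 + C2 + A) * (P + Q) = C1 * P + C1 * Q + C2 * P + C2 * Q + A * P + A * Q := by ring
  rw [e]
  linarith

end Core

namespace Core
variable {d : ℕ}

lemma Sm.mul3 {f g ζ : E d → ℝ} (hf : Sm f) (hg : Sm g) (hζ : Sm ζ) (n : ℕ) :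
    Sm (fun q => f q * g q * ζ q ^ n) := (ContDiff.mul hf hg).mul (ContDiff.pow hζ n)

lemma pd_triple {f g ζ : E d → ℝ} (hf : Sm f) (hg : Sm g) (hζ : Sm ζ) (n : ℕ) (v p : E d) :
    pd v (fun q => f q * g q * ζ q ^ (2 * n + 2)) p =
      (pd v f p * g p + f p * pd v g p) * ζ p ^ (2 * n + 2)
      + f p * g p * ((2 * n + 2) * ζ p ^ (2 * n + 1) * pd v ζ p) := by
  have h1 : Sm (fun q => f q * g q) := ContDiff.mul hf hg
  have h2 : Sm (fun q => ζ q ^ (2 * n + 2)) := ContDiff.pow hζ _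
  rw [pd_mul h1 h2, pd_mul hf hg, pd_pow hζ (2 * n + 1)]
  push_cast
  ring

lemma hcs3 {f g ζ : E d → ℝ} (hζ : HasCompactSupport ζ) (n : ℕ) :
    HasCompactSupport (fun q => f q * g q * ζ q ^ (2 * n + 2)) := by
  refine HasCompactSupport.intro hζ ?_
  intro x hx
  simp [image_eq_zero_of_notMem_tsupport hx]

lemma JJ_int {ζ : E d → ℝ} {r M : ℝ} (hζ : Cut ζ r M) {n : ℕ} (hn : n ≠ 0) {w : E d → ℝ}
    (hw : Sm w) : Integrable (fun x : Fin d → ℝ => ζ (0, x) ^ (2 * n) * w (0, x) ^ 2) := by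
  refine Continuous.integrable_of_hasCompactSupport ?_
    (slice_hcs (hcs_pow_mul hζ.hcs (n := 2 * n) (by omega) (fun p => w p ^ 2)))
  have := hζ.sm.continuous
  have := hw.continuous
  fun_prop

lemma time_int {z : Fin d} {K : ℝ} {b : ℝ → ℝ} (hb : Measurable b) (hbb : ∀ s, |b s| ≤ K)
    (hlb : ∀ s, K⁻¹ ≤ b s) {ζ : E d → ℝ} {r M : ℝ} (hζ : Cut ζ r M) {w : E d → ℝ} (hw : Sm w)
    (n : ℕ) :
    ∫ p in Dm d, b (p.2 z) * pd (1, 0) (fun q => w q * w q * ζ q ^ (2 * n + 2)) p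
      ≤ - (K⁻¹ * JJ ζ (n + 1) w) := by
  have hbm : Measurable (fun x : Fin d → ℝ => b (x z)) := hb.comp (measurable_pi_apply z)
  have h := ibp_t (f := fun x => b (x z)) hbm (fun x => hbb _)
    (Sm.mul3 hw hw hζ.sm (2 * n + 2)) (hcs3 hζ.hcs n)
  rw [h]
  apply neg_le_neg
  unfold JJ
  rw [← integral_const_mul]
  refine integral_mono ((JJ_int hζ (by omega) hw).const_mul _) ?_ ?_
  · have hG : Integrable (fun x : Fin d → ℝ => w (0, x) * w (0, x) * ζ (0, x) ^ (2 * n + 2)) := by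
      refine Continuous.integrable_of_hasCompactSupport ?_
        (slice_hcs (G := fun q => w q * w q * ζ q ^ (2 * n + 2)) (hcs3 hζ.hcs n))
      have := hζ.sm.continuous
      have := hw.continuous
      fun_prop
    have hbn : ∀ᵐ x : Fin d → ℝ, ‖b (x z)‖ ≤ K := Filter.Eventually.of_forall fun x => hbb _
    exact hG.bdd_mul hbm.aestronglyMeasurable hbn
  · intro x
    have h1 : 0 ≤ ζ (0, x) ^ (2 * (n + 1)) * w (0, x) ^ 2 :=
      mul_nonneg (pow_nonneg (hζ.nn _) _) (sq_nonneg _)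
    have h2 := mul_le_mul_of_nonneg_right (hlb (x z)) h1
    have h3 : w (0, x) * w (0, x) * ζ (0, x) ^ (2 * n + 2)
      = ζ (0, x) ^ (2 * (n + 1)) * w (0, x) ^ 2 := by ring
    simp only
    rw [h3]
    exact h2

lemma A1 (z : Fin d) {K M r : ℝ} (hK : 0 < K) (hM : 0 ≤ M) {ζ : E d → ℝ} (hζ : Cut ζ r M)
    (n : ℕ) (hn : n ≠ 0) :
    ∃ C : ℝ, 0 ≤ C ∧ ∀ b c, Coef z K b c → ∀ U : Set (E d),
      (∀ p : E d, 0 < p.1 → ‖p‖ ≤ r → p ∈ U) → ∀ w, Sol z b c U w →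
      JJ ζ (n + 1) w ≤ C * II ζ n w ∧ ∀ j, II ζ (n + 1) (pdx j w) ≤ C * II ζ n w := by
  obtain ⟨C, hC0, hC⟩ := num1 d hK hM n
  refine ⟨2 * K * C, by positivity, ?_⟩
  intro b c hco U hU w hw
  set α : Fin d → Fin d → Fin d := fun j k => if k = z then k else j with hα
  set β : Fin d → Fin d → Fin d := fun j k => if k = z then j else k with hβ
  set Dv : Fin d → Fin d → E d → ℝ := fun j k p => c (p.2 z) j k *
    pd (0, Pi.single (β j k) 1) (fun q => w q * pdx (α j k) w q * ζ q ^ (2 * n + 2)) p with hDv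
  set Tm : E d → ℝ := fun p => b (p.2 z) *
    pd (1, 0) (fun q => w q * w q * ζ q ^ (2 * n + 2)) p with hTm
  have hcm : ∀ j k, Measurable (fun p : E d => c (p.2 z) j k) := fun j k =>
    (hco.mc j k).comp ((measurable_pi_apply z).comp measurable_snd)
  have hbm : Measurable (fun p : E d => b (p.2 z)) :=
    hco.mb.comp ((measurable_pi_apply z).comp measurable_snd)
  have hDi : ∀ j k, IntegrableOn (Dv j k) (Dm d) := fun j k =>
    (integ (hcm j k) (fun p => hco.bc _ j k)
      (Sm.pd (Sm.mul3 hw.sm (Sm.pdx hw.sm (α j k)) hζ.sm (2 * n + 2)) _).continuous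
      (hcs_pd (hcs3 hζ.hcs n) _)).integrableOn
  have hTi : IntegrableOn Tm (Dm d) :=
    (integ hbm (fun p => hco.bb _)
      (Sm.pd (Sm.mul3 hw.sm hw.sm hζ.sm (2 * n + 2)) _).continuous
      (hcs_pd (hcs3 hζ.hcs n) _)).integrableOn
  have hD0 : ∀ j k, ∫ p in Dm d, Dv j k p = 0 := by
    intro j k
    refine ibp_x (hcm j k) (fun p => hco.bc _ j k) rfl ?_
      (Sm.mul3 hw.sm (Sm.pdx hw.sm (α j k)) hζ.sm (2 * n + 2)) (hcs3 hζ.hcs n)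
    intro p s
    by_cases hb : β j k = z
    · have hk : k = z ∧ j = z := by
        simp only [hβ] at hb
        split_ifs at hb with h
        · exact ⟨h, hb⟩
        · exact absurd hb h
      rw [hk.1, hk.2, hco.one, hco.one]
    · have : (p + s • ((0 : ℝ), (Pi.single (β j k) 1 : Fin d → ℝ))).2 z = p.2 z := by
        simp [Pi.single_eq_of_ne' hb]
      rw [this]
  have hpt : ∀ p ∈ Dm d, K⁻¹ / 2 * (∑ j, ζ p ^ (2 * (n + 1)) * pdx j w p ^ 2) ≤
      (∑ j, ∑ k, Dv j k p) + 1 / 2 * Tm p + C * (ζ p ^ (2 * n) * w p ^ 2) := by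
    intro p hp
    have h := hC (ζ p) (w p) (pdt w p) (b (p.2 z)) (pdt ζ p) (fun j => pdx j w p)
      (fun j => pdx j ζ p) (fun j k => pdxx j k w p) (fun j k => c (p.2 z) j k) α β
      (hζ.nn p) (hζ.le1 p) (hζ.bt p) (fun j => hζ.bx j p) (fun j k => hco.bc _ j k) (hco.bb _)
      (hco.ell _ _) (fun h => hw.eq p (hU p hp.1 (hζ.supp p h)))
    refine h.trans (le_of_eq ?_)
    have e1 : ∀ j k, Dv j k p = c (p.2 z) j k * (pdx j w p * pdx k w p * ζ p ^ (2 * n + 2)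
        + w p * pdxx j k w p * ζ p ^ (2 * n + 2)
        + w p * pdx (α j k) w p * ((2 * n + 2) * ζ p ^ (2 * n + 1) * pdx (β j k) ζ p)) := by
      intro j k
      simp only [hDv]
      rw [pd_triple hw.sm (Sm.pdx hw.sm _) hζ.sm]
      simp only [← pdx_eq]
      by_cases hk : k = z
      · simp only [hα, hβ, hk, if_true, pdxx]; ring
      · have : pdx k (pdx j w) = pdxx j k w := pd_comm hw.sm _ _
        simp only [hα, hβ, hk, if_false, this]; ring
    have e2 : Tm p = b (p.2 z) * (2 * w p * pdt w p * ζ p ^ (2 * n + 2)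
        + w p ^ 2 * ((2 * n + 2) * ζ p ^ (2 * n + 1) * pdt ζ p)) := by
      simp only [hTm]
      rw [pd_triple hw.sm hw.sm hζ.sm]
      simp only [← pdt_eq]
      ring
    simp only [e1, e2]
  have hLi : ∀ j, IntegrableOn (fun p => ζ p ^ (2 * (n + 1)) * pdx j w p ^ 2) (Dm d) := fun j =>
    (II_int hζ (by omega) (Sm.pdx hw.sm j)).integrableOn
  have hWi : IntegrableOn (fun p => ζ p ^ (2 * n) * w p ^ 2) (Dm d) :=
    (II_int hζ hn hw.sm).integrableOn
  have hSi : IntegrableOn (fun p => ∑ j, ∑ k, Dv j k p) (Dm d) :=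
    integrable_finsetSum _ fun j _ => integrable_finsetSum _ fun k _ => hDi j k
  have hmono := setIntegral_mono_on
    ((integrable_finsetSum Finset.univ fun j _ => hLi j).const_mul (K⁻¹ / 2))
    ((hSi.add (hTi.const_mul (1 / 2))).add (hWi.const_mul C)) meas_Dm hpt
  have eL : ∫ p in Dm d, K⁻¹ / 2 * (∑ j, ζ p ^ (2 * (n + 1)) * pdx j w p ^ 2)
      = K⁻¹ / 2 * ∑ j, II ζ (n + 1) (pdx j w) := by
    rw [integral_const_mul, integral_finsetSum _ fun j _ => hLi j]
    rfl
  have eS : ∫ p in Dm d, ∑ j, ∑ k, Dv j k p = 0 := by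
    rw [integral_finsetSum _ fun j _ => integrable_finsetSum _ fun k _ => hDi j k]
    refine Finset.sum_eq_zero fun j _ => ?_
    rw [integral_finsetSum _ fun k _ => hDi j k]
    exact Finset.sum_eq_zero fun k _ => hD0 j k
  have eR : ∫ p in Dm d, ((∑ j, ∑ k, Dv j k p) + 1 / 2 * Tm p + C * (ζ p ^ (2 * n) * w p ^ 2))
      = 1 / 2 * (∫ p in Dm d, Tm p) + C * II ζ n w := by
    have h12 : IntegrableOn (fun p => (∑ j, ∑ k, Dv j k p) + 1 / 2 * Tm p) (Dm d) :=
      hSi.add (hTi.const_mul (1 / 2))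
    rw [integral_add h12 (hWi.const_mul C),
      integral_add hSi (hTi.const_mul (1 / 2)), eS, integral_const_mul, integral_const_mul, zero_add]
    rfl
  have hmono2 : K⁻¹ / 2 * ∑ j, II ζ (n + 1) (pdx j w) ≤
      1 / 2 * (∫ p in Dm d, Tm p) + C * II ζ n w := by
    rw [← eL, ← eR]; exact hmono
  have hT := time_int (z := z) hco.mb hco.bb hco.lb hζ hw.sm n
  have hT' : ∫ p in Dm d, Tm p ≤ - (K⁻¹ * JJ ζ (n + 1) w) := hT
  have hJ0 : 0 ≤ JJ ζ (n + 1) w := JJ_nonneg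
  have hS0 : 0 ≤ ∑ j, II ζ (n + 1) (pdx j w) := Finset.sum_nonneg fun j _ => II_nonneg
  have hKi : 0 < K⁻¹ := by positivity
  have hb : ∀ x, K⁻¹ * x ≤ 2 * C * II ζ n w → x ≤ 2 * K * C * II ζ n w := by
    intro x hx
    have := mul_le_mul_of_nonneg_left hx hK.le
    rw [← mul_assoc, mul_inv_cancel₀ hK.ne', one_mul] at this
    linarith
  constructor
  · apply hb
    have := mul_nonneg hKi.le hS0
    linarith
  · intro j
    apply hb
    have h1 : II ζ (n + 1) (pdx j w) ≤ ∑ j, II ζ (n + 1) (pdx j w) :=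
      Finset.single_le_sum (f := fun j => II ζ (n + 1) (pdx j w)) (fun i _ => II_nonneg)
        (Finset.mem_univ _)
    have h2 := mul_le_mul_of_nonneg_left h1 hKi.le
    have := mul_nonneg hKi.le hJ0
    linarith

lemma A2 (z : Fin d) {K M r : ℝ} (hK : 1 ≤ K) (hM : 0 ≤ M) {ζ : E d → ℝ} (hζ : Cut ζ r M)
    (n : ℕ) (hn : n ≠ 0) :
    ∃ C : ℝ, 0 ≤ C ∧ ∀ b c, Coef z K b c → ∀ U : Set (E d),
      (∀ p : E d, 0 < p.1 → ‖p‖ ≤ r → p ∈ U) → ∀ w, Sol z b c U w →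
      ∀ Q, Q = II ζ n (pdx z w) +
        ∑ j, ∑ k ∈ Finset.univ.filter (· ≠ z), II ζ (n + 1) (pdxx j k w) →
      JJ ζ (n + 1) (pdx z w) ≤ C * Q ∧ II ζ (n + 1) (pdt w) ≤ C * Q := by
  have hK0 : 0 < K := by linarith
  obtain ⟨C, hC0, hC⟩ := num2 d z hK0 hM n
  refine ⟨2 * K * C, by positivity, ?_⟩
  intro b c hco U hU w hw Q hQ
  have hwz := Sm.pdx hw.sm z
  have hwt := Sm.pdt hw.sm
  set Dv : E d → ℝ := fun p => 1 *
    pd (0, Pi.single z 1) (fun q => pdx z w q * pdt w q * ζ q ^ (2 * n + 2)) p with hDv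
  set Tm : E d → ℝ := fun p => (fun _ : ℝ => (1:ℝ)) (p.2 z) *
    pd (1, 0) (fun q => pdx z w q * pdx z w q * ζ q ^ (2 * n + 2)) p with hTm
  have hDi : IntegrableOn Dv (Dm d) :=
    (integ (C := 1) measurable_const (fun p => by simp)
      (Sm.pd (Sm.mul3 hwz hwt hζ.sm (2 * n + 2)) _).continuous
      (hcs_pd (hcs3 hζ.hcs n) _)).integrableOn
  have hTi : IntegrableOn Tm (Dm d) :=
    (integ (C := 1) measurable_const (fun p => by simp)
      (Sm.pd (Sm.mul3 hwz hwz hζ.sm (2 * n + 2)) _).continuous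
      (hcs_pd (hcs3 hζ.hcs n) _)).integrableOn
  have hD0 : ∫ p in Dm d, Dv p = 0 :=
    ibp_x (f := fun _ => 1) (C := 1) measurable_const (fun p => by simp) rfl (fun _ _ => rfl)
      (Sm.mul3 hwz hwt hζ.sm (2 * n + 2)) (hcs3 hζ.hcs n)
  have hpt : ∀ p ∈ Dm d, K⁻¹ / 2 * (ζ p ^ (2 * (n + 1)) * pdt w p ^ 2) ≤
      (-1) * Dv p + 1 / 2 * Tm p + C * (ζ p ^ (2 * n) * pdx z w p ^ 2
        + ∑ j, ∑ k ∈ Finset.univ.filter (· ≠ z), ζ p ^ (2 * (n + 1)) * pdxx j k w p ^ 2) := by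
    intro p hp
    have h := hC (ζ p) (pdt w p) (b (p.2 z)) (pdt ζ p) (pdx z w p) (pdt (pdx z w) p)
      (pdx z ζ p) (fun j k => pdxx j k w p) (fun j k => c (p.2 z) j k)
      (hζ.nn p) (hζ.le1 p) (hζ.bt p) (hζ.bx z p) (fun j k => hco.bc _ j k) (hco.lb _)
      (fun j k => hco.symm _ j k)
      (fun j k => congrFun (pd_comm hw.sm _ _ : pdxx j k w = pdxx k j w) p) (hco.one _)
      (fun h => hw.eq p (hU p hp.1 (hζ.supp p h)))
    refine h.trans (le_of_eq ?_)
    have e1 : Dv p = pdxx z z w p * pdt w p * ζ p ^ (2 * n + 2)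
        + pdx z w p * pdt (pdx z w) p * ζ p ^ (2 * n + 2)
        + pdx z w p * pdt w p * ((2 * n + 2) * ζ p ^ (2 * n + 1) * pdx z ζ p) := by
      simp only [hDv]
      rw [pd_triple hwz hwt hζ.sm]
      have : pdx z (pdt w) = pdt (pdx z w) := pd_comm hw.sm _ _
      simp only [← pdx_eq, this, pdxx]
      ring
    have e2 : Tm p = (2 * pdx z w p * pdt (pdx z w) p * ζ p ^ (2 * n + 2)
        + pdx z w p ^ 2 * ((2 * n + 2) * ζ p ^ (2 * n + 1) * pdt ζ p)) := by
      simp only [hTm]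
      rw [pd_triple hwz hwz hζ.sm]
      simp only [← pdt_eq]
      ring
    simp only [e1, e2]
    have e3 : 2 * (n + 1) = 2 * n + 2 := by ring
    rw [e3]
    ring
  have hLi : IntegrableOn (fun p => ζ p ^ (2 * (n + 1)) * pdt w p ^ 2) (Dm d) :=
    (II_int hζ (by omega) hwt).integrableOn
  have hWi : IntegrableOn (fun p => ζ p ^ (2 * n) * pdx z w p ^ 2) (Dm d) :=
    (II_int hζ hn hwz).integrableOn
  have hXi : ∀ j k, IntegrableOn (fun p => ζ p ^ (2 * (n + 1)) * pdxx j k w p ^ 2) (Dm d) :=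
    fun j k => (II_int hζ (by omega) (Sm.pdx (Sm.pdx hw.sm k) j)).integrableOn
  have hSi : IntegrableOn (fun p => ∑ j, ∑ k ∈ Finset.univ.filter (· ≠ z),
      ζ p ^ (2 * (n + 1)) * pdxx j k w p ^ 2) (Dm d) :=
    integrable_finsetSum _ fun j _ => integrable_finsetSum _ fun k _ => hXi j k
  have hmono := setIntegral_mono_on (hLi.const_mul (K⁻¹ / 2))
    (((hDi.const_mul (-1)).add (hTi.const_mul (1 / 2))).add ((hWi.add hSi).const_mul C)) meas_Dm hpt
  have eL : ∫ p in Dm d, K⁻¹ / 2 * (ζ p ^ (2 * (n + 1)) * pdt w p ^ 2)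
      = K⁻¹ / 2 * II ζ (n + 1) (pdt w) := by
    rw [integral_const_mul]
    rfl
  have eS : ∫ p in Dm d, (∑ j, ∑ k ∈ Finset.univ.filter (· ≠ z),
      ζ p ^ (2 * (n + 1)) * pdxx j k w p ^ 2)
      = ∑ j, ∑ k ∈ Finset.univ.filter (· ≠ z), II ζ (n + 1) (pdxx j k w) := by
    rw [integral_finsetSum _ fun j _ => integrable_finsetSum _ fun k _ => hXi j k]
    refine Finset.sum_congr rfl fun j _ => ?_
    rw [integral_finsetSum _ fun k _ => hXi j k]
    rfl
  have eR : ∫ p in Dm d, ((-1) * Dv p + 1 / 2 * Tm p + C * (ζ p ^ (2 * n) * pdx z w p ^ 2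
        + ∑ j, ∑ k ∈ Finset.univ.filter (· ≠ z), ζ p ^ (2 * (n + 1)) * pdxx j k w p ^ 2))
      = 1 / 2 * (∫ p in Dm d, Tm p) + C * Q := by
    have h12 : IntegrableOn (fun p => (-1) * Dv p + 1 / 2 * Tm p) (Dm d) :=
      (hDi.const_mul (-1)).add (hTi.const_mul (1 / 2))
    have h34 : IntegrableOn (fun p => C * (ζ p ^ (2 * n) * pdx z w p ^ 2
        + ∑ j, ∑ k ∈ Finset.univ.filter (· ≠ z), ζ p ^ (2 * (n + 1)) * pdxx j k w p ^ 2)) (Dm d) :=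
      (hWi.add hSi).const_mul C
    have eT : ∫ p in Dm d, 1 / 2 * Tm p = 1 / 2 * ∫ p in Dm d, Tm p := integral_const_mul _ _
    have eC : ∫ p in Dm d, C * (ζ p ^ (2 * n) * pdx z w p ^ 2
        + ∑ j, ∑ k ∈ Finset.univ.filter (· ≠ z), ζ p ^ (2 * (n + 1)) * pdxx j k w p ^ 2)
        = C * Q := by
      rw [integral_const_mul, integral_add hWi hSi, eS, hQ]
      rfl
    have eD : ∫ p in Dm d, (-1) * Dv p = 0 := by
      rw [integral_const_mul (-1) Dv, hD0, mul_zero]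
    rw [integral_add h12 h34,
      integral_add (hDi.const_mul (-1)) (hTi.const_mul (1 / 2)), eD, eT, eC, zero_add]
  have hmono2 : K⁻¹ / 2 * II ζ (n + 1) (pdt w) ≤ 1 / 2 * (∫ p in Dm d, Tm p) + C * Q := by
    rw [← eL, ← eR]; exact hmono
  have hT := time_int (z := z) (K := 1) (b := fun _ => 1) measurable_const (fun _ => by simp)
    (fun _ => by simp) hζ hwz n
  have hT' : ∫ p in Dm d, Tm p ≤ - ((1:ℝ)⁻¹ * JJ ζ (n + 1) (pdx z w)) := hT
  have hJ0 : 0 ≤ JJ ζ (n + 1) (pdx z w) := JJ_nonneg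
  have hS0 : 0 ≤ II ζ (n + 1) (pdt w) := II_nonneg
  have hQ0 : 0 ≤ Q := by
    rw [hQ]
    exact add_nonneg II_nonneg (Finset.sum_nonneg fun j _ => Finset.sum_nonneg fun k _ => II_nonneg)
  have hKi : 0 < K⁻¹ := by positivity
  have hCQ : 0 ≤ C * Q := by positivity
  rw [inv_one, one_mul] at hT'
  constructor
  · have := mul_nonneg hKi.le hS0
    have : C * Q ≤ K * (C * Q) := le_mul_of_one_le_left hCQ hK
    linarith
  · have hx : K⁻¹ * II ζ (n + 1) (pdt w) ≤ 2 * C * Q := by linarith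
    have := mul_le_mul_of_nonneg_left hx hK0.le
    rw [← mul_assoc, mul_inv_cancel₀ hK0.ne', one_mul] at this
    linarith

end Core

namespace Core
variable {d : ℕ}

lemma step (z : Fin d) {K M r : ℝ} (hK : 1 ≤ K) (hM : 0 ≤ M) {ζ : E d → ℝ} (hζ : Cut ζ r M)
    (n : ℕ) (hn : n ≠ 0) :
    ∃ C : ℝ, 0 ≤ C ∧ ∀ b c, Coef z K b c → ∀ U : Set (E d), IsOpen U →
      (∀ p : E d, 0 < p.1 → ‖p‖ ≤ r → p ∈ U) → ∀ w, Sol z b c U w →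
      II ζ (n + 2) (pdt w) ≤ C * II ζ n w ∧
      (∀ k, k ≠ z → II ζ (n + 2) (pdx k w) ≤ C * II ζ n w) ∧
      JJ ζ (n + 2) w ≤ C * II ζ n w ∧ JJ ζ (n + 2) (pdx z w) ≤ C * II ζ n w := by
  obtain ⟨C1, hC1, H1⟩ := A1 z (by linarith : 0 < K) hM hζ n hn
  obtain ⟨C3, hC3, H3⟩ := A1 z (by linarith : 0 < K) hM hζ (n + 1) (by omega)
  obtain ⟨C2, hC2, H2⟩ := A2 z hK hM hζ (n + 1) (by omega)
  have hq : 0 ≤ C2 * (C1 + d * d * (C3 * C1)) := by positivity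
  refine ⟨C1 + C2 * (C1 + d * d * (C3 * C1)), by positivity, ?_⟩
  intro b c hco U hUo hU w hw
  obtain ⟨j1, i1⟩ := H1 b c hco U hU w hw
  have hI : 0 ≤ II ζ n w := II_nonneg
  have hx : ∀ j k, k ≠ z → II ζ (n + 1 + 1) (pdxx j k w) ≤ C3 * C1 * II ζ n w := by
    intro j k hk
    have := (H3 b c hco U hU (pdx k w) (hw.dx hUo hk)).2 j
    calc _ ≤ C3 * II ζ (n + 1) (pdx k w) := this
      _ ≤ C3 * (C1 * II ζ n w) := mul_le_mul_of_nonneg_left (i1 k) hC3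
      _ = _ := by ring
  have hQ : II ζ (n + 1) (pdx z w) + ∑ j, ∑ k ∈ Finset.univ.filter (· ≠ z),
      II ζ (n + 1 + 1) (pdxx j k w) ≤ (C1 + d * d * (C3 * C1)) * II ζ n w := by
    have h2 : ∑ j, ∑ k ∈ Finset.univ.filter (· ≠ z), II ζ (n + 1 + 1) (pdxx j k w) ≤
        ∑ j : Fin d, ∑ k : Fin d, C3 * C1 * II ζ n w := by
      refine Finset.sum_le_sum fun j _ => ?_
      refine (Finset.sum_le_sum fun k hk => hx j k (Finset.mem_filter.1 hk).2).trans ?_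
      exact Finset.sum_le_sum_of_subset_of_nonneg (Finset.filter_subset _ _)
        fun _ _ _ => by positivity
    simp only [Finset.sum_const, Finset.card_univ, Fintype.card_fin, nsmul_eq_mul] at h2
    have := i1 z
    linarith
  obtain ⟨j2, i2⟩ := H2 b c hco U hU w hw _ rfl
  have h3 := mul_le_mul_of_nonneg_left hQ hC2
  rw [← mul_assoc] at h3
  have h4 : C1 * II ζ n w ≤ (C1 + C2 * (C1 + d * d * (C3 * C1))) * II ζ n w :=
    mul_le_mul_of_nonneg_right (by linarith) hI
  have h5 : C2 * (C1 + d * d * (C3 * C1)) * II ζ n w ≤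
    (C1 + C2 * (C1 + d * d * (C3 * C1))) * II ζ n w :=
    mul_le_mul_of_nonneg_right (by linarith) hI
  refine ⟨(i2.trans h3).trans h5, fun k hk => ?_, ?_, (j2.trans h3).trans h5⟩
  · exact ((II_anti hζ (by omega) (by omega) (Sm.pdx hw.sm k)).trans (i1 k)).trans h4
  · exact ((JJ_anti hζ (by omega) (by omega) hw.sm).trans j1).trans h4

/-- tangential derivatives of order m -/
inductive Der (z : Fin d) (H : E d → ℝ) : ℕ → (E d → ℝ) → Prop
  | zero : Der z H 0 H
  | dt {m : ℕ} {w : E d → ℝ} : Der z H m w → Der z H (m + 1) (pdt w)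
  | dx {m : ℕ} {w : E d → ℝ} {k : Fin d} : k ≠ z → Der z H m w → Der z H (m + 1) (pdx k w)

lemma Der.sol {z : Fin d} {b : ℝ → ℝ} {c : ℝ → Fin d → Fin d → ℝ} {U : Set (E d)}
    {H : E d → ℝ} (hU : IsOpen U) (h : Sol z b c U H) {m : ℕ} {w : E d → ℝ}
    (hw : Der z H m w) : Sol z b c U w := by
  induction hw with
  | zero => exact h
  | dt _ ih => exact ih.dt hU
  | dx hk _ ih => exact ih.dx hU hk

lemma induct (z : Fin d) {K M r : ℝ} (hK : 1 ≤ K) (hM : 0 ≤ M) {ζ : E d → ℝ} (hζ : Cut ζ r M)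
    (m : ℕ) :
    ∃ C : ℝ, 0 ≤ C ∧ ∀ b c, Coef z K b c → ∀ U : Set (E d), IsOpen U →
      (∀ p : E d, 0 < p.1 → ‖p‖ ≤ r → p ∈ U) → ∀ H, Sol z b c U H → ∀ w, Der z H m w →
      II ζ (2 * m + 1) w ≤ C * II ζ 1 H := by
  induction m with
  | zero =>
    refine ⟨1, by norm_num, ?_⟩
    intro b c _ U _ _ H _ w hw
    cases hw
    simp
  | succ m ih =>
    obtain ⟨C, hC, h⟩ := ih
    obtain ⟨C', hC', h'⟩ := step z hK hM hζ (2 * m + 1) (by omega)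
    refine ⟨C' * C, by positivity, ?_⟩
    intro b c hco U hUo hU H hH w hw
    have key : ∀ v, Der z H m v → C' * II ζ (2 * m + 1) v ≤ C' * C * II ζ 1 H := by
      intro v hv
      rw [mul_assoc]
      exact mul_le_mul_of_nonneg_left (h b c hco U hUo hU H hH v hv) hC'
    cases hw with
    | dt hv => exact (h' b c hco U hUo hU _ (hv.sol hUo hH)).1.trans (key _ hv)
    | dx hk hv => exact ((h' b c hco U hUo hU _ (hv.sol hUo hH)).2.1 _ hk).trans (key _ hv)

lemma slice_bd (z : Fin d) {K M r : ℝ} (hK : 1 ≤ K) (hM : 0 ≤ M) {ζ : E d → ℝ} (hζ : Cut ζ r M)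
    (m : ℕ) :
    ∃ C : ℝ, 0 ≤ C ∧ ∀ b c, Coef z K b c → ∀ U : Set (E d), IsOpen U →
      (∀ p : E d, 0 < p.1 → ‖p‖ ≤ r → p ∈ U) → ∀ H, Sol z b c U H → ∀ w, Der z H m w →
      JJ ζ (2 * m + 3) w ≤ C * II ζ 1 H ∧ JJ ζ (2 * m + 3) (pdx z w) ≤ C * II ζ 1 H := by
  obtain ⟨C, hC, h⟩ := induct z hK hM hζ m
  obtain ⟨C', hC', h'⟩ := step z hK hM hζ (2 * m + 1) (by omega)
  refine ⟨C' * C, by positivity, ?_⟩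
  intro b c hco U hUo hU H hH w hw
  have key : C' * II ζ (2 * m + 1) w ≤ C' * C * II ζ 1 H := by
    rw [mul_assoc]
    exact mul_le_mul_of_nonneg_left (h b c hco U hUo hU H hH w hw) hC'
  have := h' b c hco U hUo hU _ (hw.sol hUo hH)
  exact ⟨this.2.2.1.trans key, this.2.2.2.trans key⟩

end Core

namespace Core
variable {d : ℕ}

lemma sob1 {g g' : ℝ → ℝ} (hg : ∀ s, HasDerivAt g (g' s) s) (hg' : Continuous g') {ρ : ℝ}
    (hρ : 0 < ρ) {s0 : ℝ} (h0 : s0 ∈ Set.Icc 0 ρ) :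
    g s0 ^ 2 ≤ (1 + ρ) / ρ * ∫ s in Set.Icc 0 ρ, (g s ^ 2 + g' s ^ 2) := by
  have hgc : Continuous g := continuous_iff_continuousAt.2 fun s => (hg s).continuousAt
  have hc : Continuous (fun s => g s ^ 2 + g' s ^ 2) := by fun_prop
  rw [integral_Icc_eq_integral_Ioc, ← intervalIntegral.integral_of_le hρ.le]
  set F : ℝ → ℝ := fun x => ∫ s in (0:ℝ)..x, (g s ^ 2 + g' s ^ 2) with hF
  have hFd : ∀ x, HasDerivAt F (g x ^ 2 + g' x ^ 2) x := fun x =>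
    intervalIntegral.integral_hasDerivAt_right (hc.intervalIntegrable _ _)
      hc.stronglyMeasurable.stronglyMeasurableAtFilter hc.continuousAt
  have hsq : ∀ x, HasDerivAt (fun x => g x ^ 2) (2 * g x * g' x) x := by
    intro x
    exact ((hg x).fun_pow 2).congr_deriv (by norm_num)
  have hm : ∀ f f' : ℝ → ℝ, (∀ x, HasDerivAt f (f' x) x) → (∀ x, 0 ≤ f' x) → Monotone f := by
    intro f f' h1 h2
    refine monotone_of_deriv_nonneg (fun x => (h1 x).differentiableAt) fun x => ?_
    rw [(h1 x).deriv]; exact h2 x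
  have m1 : Monotone F := hm _ _ hFd fun x => by positivity
  have m2 : Monotone (fun x => F x - g x ^ 2) :=
    hm _ _ (fun x => (hFd x).sub (hsq x)) fun x => by nlinarith [sq_nonneg (g x - g' x)]
  have m3 : Monotone (fun x => F x + g x ^ 2) :=
    hm _ _ (fun x => (hFd x).add (hsq x)) fun x => by nlinarith [sq_nonneg (g x + g' x)]
  have hF0 : F 0 = 0 := by simp [hF]
  have key : ∀ s ∈ Set.Icc 0 ρ, g s0 ^ 2 ≤ g s ^ 2 + F ρ := by
    intro s hs
    have a1 := m1 hs.1
    have a2 := m1 hs.2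
    have a3 := m1 h0.1
    have a4 := m1 h0.2
    rcases le_total s s0 with h | h
    · have := m2 h
      simp only at this
      linarith
    · have := m3 h
      simp only at this
      linarith
  have hint : ∫ s in (0:ℝ)..ρ, g s0 ^ 2 ≤ ∫ s in (0:ℝ)..ρ, ((g s ^ 2 + g' s ^ 2) + F ρ) := by
    refine intervalIntegral.integral_mono_on hρ.le (by simp)
      (Continuous.intervalIntegrable (by fun_prop) _ _) fun s hs => ?_
    have := key s hs
    nlinarith [sq_nonneg (g' s)]
  rw [intervalIntegral.integral_add (hc.intervalIntegrable _ _) (by simp)] at hint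
  simp only [intervalIntegral.integral_const, sub_zero, smul_eq_mul] at hint
  change _ ≤ (1 + ρ) / ρ * F ρ
  change _ ≤ F ρ + _ at hint
  rw [div_mul_eq_mul_div, le_div_iff₀ hρ]
  linarith

/-- cube -/
def cube (d : ℕ) (ρ : ℝ) : Set (Fin d → ℝ) := Set.Icc 0 (fun _ => ρ)

/-- slice density -/
noncomputable def fq (ρ : ℝ) (w : E d → ℝ) : (Fin d → ℝ) → ENNReal :=
  (cube d ρ).indicator fun x => ENNReal.ofReal (w (0, x) ^ 2)

lemma fq_meas {ρ : ℝ} {w : E d → ℝ} (hw : Sm w) : Measurable (fq ρ w) := by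
  refine Measurable.indicator ?_ measurableSet_Icc
  have := hw.continuous
  exact (by fun_prop : Continuous fun x : Fin d → ℝ => w (0, x) ^ 2).measurable.ennreal_ofReal

lemma upd_mem {ρ : ℝ} {y : Fin d → ℝ} (hy : y ∈ cube d ρ) (i : Fin d) (s : ℝ) :
    Function.update y i s ∈ cube d ρ ↔ s ∈ Set.Icc 0 ρ := by
  simp only [cube, Set.mem_Icc, Pi.le_def] at hy ⊢
  constructor
  · intro h
    have h1 := h.1 i
    have h2 := h.2 i
    simp at h1 h2
    exact ⟨h1, h2⟩
  · intro h
    constructor <;> intro j <;> by_cases hj : j = i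
    · subst hj; simpa using h.1
    · simpa [hj] using hy.1 j
    · subst hj; simpa using h.2
    · simpa [hj] using hy.2 j

lemma sob2 {ρ : ℝ} (hρ : 0 < ρ) {w : E d → ℝ} (hw : Sm w) (i : Fin d) (y : Fin d → ℝ) :
    fq ρ w y ≤ ∫⁻ s, ENNReal.ofReal ((1 + ρ) / ρ) *
      (fq ρ w (Function.update y i s) + fq ρ (pdx i w) (Function.update y i s)) := by
  by_cases hy : y ∈ cube d ρ
  swap
  · simp [fq, hy]
  have hwi := Sm.pdx hw i
  rw [lintegral_const_mul' _ _ ENNReal.ofReal_ne_top]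
  set g : ℝ → ℝ := fun s => w (0, Function.update y i s) with hg
  set g' : ℝ → ℝ := fun s => pdx i w (0, Function.update y i s) with hg'
  have hcu : Continuous (fun s : ℝ => Function.update y i s) :=
    continuous_const.update i continuous_id
  have hd : ∀ s, HasDerivAt g (g' s) s := by
    intro s
    have e : ∀ s : ℝ, ((0, Function.update y i s) : E d)
        = (0, Function.update y i 0) + s • (0, Pi.single i 1) := by
      intro s
      ext j
      · simp
      · by_cases hj : j = i
        · subst hj; simp
        · simp [hj]
    have := hasDerivAt_line hw (0, Pi.single i 1) (0, Function.update y i 0) s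
    simp only [← e] at this
    exact this
  have hgc : Continuous g := continuous_iff_continuousAt.2 fun s => (hd s).continuousAt
  have hc' : Continuous g' := hwi.continuous.comp (continuous_const.prodMk hcu)
  have h0 : y i ∈ Set.Icc 0 ρ := by
    rw [← upd_mem hy i]; simpa using hy
  have h1 := sob1 hd hc' hρ h0
  have e2 : ∀ s, fq ρ w (Function.update y i s) + fq ρ (pdx i w) (Function.update y i s)
      = (Set.Icc 0 ρ).indicator (fun s => ENNReal.ofReal (g s ^ 2 + g' s ^ 2)) s := by
    intro s
    by_cases hs : s ∈ Set.Icc 0 ρ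
    · have := (upd_mem hy i s).2 hs
      simp only [fq, Set.indicator_of_mem this, Set.indicator_of_mem hs]
      rw [ENNReal.ofReal_add (by positivity) (by positivity)]
    · have := (upd_mem hy i s).not.2 hs
      simp only [fq, Set.indicator_of_notMem this, Set.indicator_of_notMem hs, add_zero]
  simp_rw [e2]
  rw [lintegral_indicator measurableSet_Icc, ← ofReal_integral_eq_lintegral_ofReal,
    ← ENNReal.ofReal_mul (by positivity)]
  · simp only [fq, Set.indicator_of_mem hy]
    refine ENNReal.ofReal_le_ofReal ?_
    simpa [hg] using h1
  · exact (by fun_prop : Continuous fun s => g s ^ 2 + g' s ^ 2).continuousOn.integrableOn_Icc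
  · exact Filter.Eventually.of_forall fun s => by positivity

/-- partial integrals -/
noncomputable def LL (ρ : ℝ) (S : Finset (Fin d)) (w : E d → ℝ) : ENNReal :=
  lmarginal (fun _ => volume) S (fq ρ w) 0

lemma sob3 {ρ : ℝ} (hρ : 0 < ρ) {w : E d → ℝ} (hw : Sm w) {i : Fin d} {S : Finset (Fin d)}
    (hi : i ∉ S) :
    LL ρ S w ≤ ENNReal.ofReal ((1 + ρ) / ρ) *
      (LL ρ (insert i S) w + LL ρ (insert i S) (pdx i w)) := by
  have m1 : Measurable (fq ρ w) := fq_meas hw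
  have m2 : Measurable (fq ρ (pdx i w)) := fq_meas (Sm.pdx hw i)
  set G : (Fin d → ℝ) → ENNReal := fun x => ENNReal.ofReal ((1 + ρ) / ρ) *
    (fq ρ w x + fq ρ (pdx i w) x) with hG
  have hGm : Measurable G := (m1.add m2).const_mul _
  have h1 : lmarginal (fun _ => volume) S (fq ρ w) ≤
      lmarginal (fun _ => volume) S (fun x => ∫⁻ s, G (Function.update x i s)) :=
    lmarginal_mono fun y => sob2 hρ hw i y
  rw [← lmarginal_insert' G hGm hi] at h1
  refine (h1 0).trans (le_of_eq ?_)
  unfold LL lmarginal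
  simp only [hG]
  have mu := measurable_updateFinset (s := insert i S) (x := (0 : Fin d → ℝ))
  rw [lintegral_const_mul' _ _ ENNReal.ofReal_ne_top]
  congr 1
  exact lintegral_add_left (m1.comp mu) _

lemma LL_univ {ζ : E d → ℝ} {r M ρ : ℝ} (hζ : Cut ζ r M) (hρ : ρ ≤ r / 2) (hρ0 : 0 ≤ ρ)
    {w : E d → ℝ} (hw : Sm w) {n : ℕ} (hn : n ≠ 0) :
    LL ρ Finset.univ w ≤ ENNReal.ofReal (JJ ζ n w) := by
  unfold LL
  rw [lmarginal_univ]
  unfold JJ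
  rw [ofReal_integral_eq_lintegral_ofReal (JJ_int hζ hn hw)
    (Filter.Eventually.of_forall fun x => mul_nonneg (by rw [pow_mul]; positivity) (sq_nonneg _))]
  refine lintegral_mono fun x => ?_
  by_cases hx : x ∈ cube d ρ
  · simp only [fq, Set.indicator_of_mem hx]
    rw [hζ.one]
    · simp
    · rw [Prod.norm_def]
      simp only [norm_zero]
      refine max_le (by linarith) ?_
      refine (pi_norm_le_iff_of_nonneg (by linarith)).2 fun j => ?_
      rw [Real.norm_eq_abs, abs_le]
      have h1 := hx.1 j
      have h2 := hx.2 j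
      simp at h1 h2
      constructor <;> linarith
  · simp [fq, hx]

lemma LL_empty {ρ : ℝ} (hρ0 : 0 ≤ ρ) (w : E d → ℝ) :
    LL ρ ∅ w = ENNReal.ofReal (w 0 ^ 2) := by
  unfold LL
  rw [lmarginal_empty]
  have : (0 : Fin d → ℝ) ∈ cube d ρ := ⟨le_rfl, fun _ => hρ0⟩
  simp only [fq, Set.indicator_of_mem this]
  rfl

/-- constants -/
noncomputable def GG (C0 : ℝ) (Cm : ℕ → ℝ) : ℕ → ℕ → ℝ
  | 0, m => C0 * (Cm m + Cm m)
  | (n + 1), m => C0 * (GG C0 Cm n m + GG C0 Cm n (m + 1))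

lemma GG_nonneg {C0 : ℝ} {Cm : ℕ → ℝ} (h0 : 0 ≤ C0) (hm : ∀ m, 0 ≤ Cm m) (n m : ℕ) :
    0 ≤ GG C0 Cm n m := by
  induction n generalizing m with
  | zero => exact mul_nonneg h0 (add_nonneg (hm _) (hm _))
  | succ n ih => exact mul_nonneg h0 (add_nonneg (ih _) (ih _))

lemma sobind {z : Fin d} {ρ I : ℝ} (hρ : 0 < ρ) (hI : 0 ≤ I) {H : E d → ℝ} {Cm : ℕ → ℝ}
    (hm : ∀ m, 0 ≤ Cm m) (hs : ∀ m w, Der z H m w → Sm w)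
    (hb : ∀ m w, Der z H m w → LL ρ Finset.univ w ≤ ENNReal.ofReal (Cm m * I) ∧
      LL ρ Finset.univ (pdx z w) ≤ ENNReal.ofReal (Cm m * I) ∧
      LL ρ Finset.univ (pdx z (pdx z w)) ≤ ENNReal.ofReal (Cm m * I))
    (R : Finset (Fin d)) (hz : z ∉ R) (m : ℕ) (w : E d → ℝ) (hw : Der z H m w) :
    LL ρ (insert z R)ᶜ w ≤ ENNReal.ofReal (GG ((1 + ρ) / ρ) Cm R.card m * I) ∧
    LL ρ (insert z R)ᶜ (pdx z w) ≤ ENNReal.ofReal (GG ((1 + ρ) / ρ) Cm R.card m * I) := by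
  have hC0 : 0 ≤ (1 + ρ) / ρ := by positivity
  have comb : ∀ (S : Finset (Fin d)) (i : Fin d) (v : E d → ℝ) (A B : ℝ), Sm v → i ∉ S →
      0 ≤ A → 0 ≤ B → LL ρ (insert i S) v ≤ ENNReal.ofReal (A * I) →
      LL ρ (insert i S) (pdx i v) ≤ ENNReal.ofReal (B * I) →
      LL ρ S v ≤ ENNReal.ofReal ((1 + ρ) / ρ * (A + B) * I) := by
    intro S i v A B hv hi hA hB h1 h2
    refine (sob3 hρ hv hi).trans ?_
    refine (mul_le_mul_right (add_le_add h1 h2) _).trans (le_of_eq ?_)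
    rw [← ENNReal.ofReal_add (by positivity) (by positivity), ← ENNReal.ofReal_mul hC0]
    congr 1
    ring
  induction R using Finset.induction_on generalizing m w with
  | empty =>
    have e : insert z (insert z (∅ : Finset (Fin d)))ᶜ = Finset.univ := by
      ext j; simp
    obtain ⟨h1, h2, h3⟩ := hb m w hw
    simp only [Finset.card_empty, GG]
    refine ⟨comb _ z w _ _ (hs m w hw) (by simp) (hm m) (hm m) (by rwa [e]) (by rwa [e]),
      comb _ z _ _ _ (Sm.pdx (hs m w hw) z) (by simp) (hm m) (hm m) (by rwa [e]) (by rwa [e])⟩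
  | insert k R hk ih =>
    simp only [Finset.mem_insert, not_or] at hz
    have hkz : k ≠ z := fun h => hz.1 h.symm
    have e : insert k (insert z (insert k R))ᶜ = (insert z R)ᶜ := by
      ext j
      simp only [Finset.mem_insert, Finset.mem_compl]
      by_cases hj : j = k
      · subst hj; simp [hk, hkz]
      · simp [hj]
    obtain ⟨h1, h2⟩ := ih hz.2 m w hw
    obtain ⟨h3, h4⟩ := ih hz.2 (m + 1) _ (Der.dx hkz hw)
    have ec : pdx k (pdx z w) = pdx z (pdx k w) := pd_comm (hs m w hw) _ _
    rw [Finset.card_insert_of_notMem hk]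
    simp only [GG]
    have g1 := GG_nonneg hC0 hm R.card m
    have g2 := GG_nonneg hC0 hm R.card (m + 1)
    refine ⟨comb _ k w _ _ (hs m w hw) (by simp) g1 g2 (by rwa [e]) (by rwa [e]),
      comb _ k _ _ _ (Sm.pdx (hs m w hw) z) (by simp) g1 g2 (by rwa [e]) (by rwa [e, ec])⟩

end Core

namespace Core
variable {d : ℕ}

lemma zz_pt {z : Fin d} {K : ℝ} (hK : 1 ≤ K) {b : ℝ → ℝ} {c : ℝ → Fin d → Fin d → ℝ}
    (hco : Coef z K b c) {U : Set (E d)} {w : E d → ℝ} (hw : Sol z b c U w) {p : E d}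
    (hp : p ∈ U) :
    pdx z (pdx z w) p ^ 2 ≤ 8 * K ^ 2 * (1 + d * d) *
      (pdt w p ^ 2 + ∑ j, ∑ k ∈ Finset.univ.filter (· ≠ z), pdxx j k w p ^ 2) := by
  have hK0 : 0 ≤ K := by linarith
  set Y : Fin d → Fin d → ℝ := fun j k => pdxx j k w p with hY
  set e : Fin d → Fin d → ℝ := c (p.2 z) with he
  set F := Finset.univ.filter (fun k : Fin d => k ≠ z) with hF
  set A := ∑ j, ∑ k ∈ F, |Y j k| with hA
  set S := ∑ j, ∑ k ∈ F, Y j k ^ 2 with hS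
  have hsym : ∀ j k, Y j k = Y k j := fun j k =>
    congrFun (pd_comm hw.sm _ _ : pdxx j k w = pdxx k j w) p
  have heq : b (p.2 z) * pdt w p + ∑ j, ∑ k, e j k * Y j k = 0 := hw.eq p hp
  have hsplit : ∀ f : Fin d → ℝ, ∑ k, f k = f z + ∑ k ∈ F, f k := by
    intro f
    have : F = Finset.univ.erase z := by ext; simp [hF]
    rw [this, Finset.add_sum_erase _ _ (Finset.mem_univ z)]
  have h1 : ∑ j, ∑ k, e j k * Y j k =
      Y z z + ∑ j ∈ F, e j z * Y z j + ∑ j, ∑ k ∈ F, e j k * Y j k := by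
    rw [Finset.sum_congr rfl fun j _ => hsplit _, Finset.sum_add_distrib, hsplit]
    have : e z z = 1 := hco.one _
    rw [this, one_mul]
    congr 2
    exact Finset.sum_congr rfl fun j _ => by rw [hsym]
  have hA0 : ∀ j, 0 ≤ ∑ k ∈ F, |Y j k| := fun j => Finset.sum_nonneg fun k _ => abs_nonneg _
  have hb1 : |∑ j ∈ F, e j z * Y z j| ≤ K * A := by
    have : ∑ k ∈ F, |Y z k| ≤ A :=
      Finset.single_le_sum (f := fun j => ∑ k ∈ F, |Y j k|) (fun j _ => hA0 j) (Finset.mem_univ z)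
    refine (Finset.abs_sum_le_sum_abs _ _).trans ((?_ : _ ≤ K * ∑ k ∈ F, |Y z k|).trans
      (mul_le_mul_of_nonneg_left this hK0))
    rw [Finset.mul_sum]
    refine Finset.sum_le_sum fun j _ => ?_
    rw [abs_mul]
    exact mul_le_mul_of_nonneg_right (hco.bc _ _ _) (abs_nonneg _)
  have hb2 : |∑ j, ∑ k ∈ F, e j k * Y j k| ≤ K * A := by
    refine (Finset.abs_sum_le_sum_abs _ _).trans ?_
    rw [hA, Finset.mul_sum]
    refine Finset.sum_le_sum fun j _ => (Finset.abs_sum_le_sum_abs _ _).trans ?_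
    rw [Finset.mul_sum]
    refine Finset.sum_le_sum fun k _ => ?_
    rw [abs_mul]
    exact mul_le_mul_of_nonneg_right (hco.bc _ _ _) (abs_nonneg _)
  have hb3 : |b (p.2 z) * pdt w p| ≤ K * |pdt w p| := by
    rw [abs_mul]
    exact mul_le_mul_of_nonneg_right (hco.bb _) (abs_nonneg _)
  have hzz : |Y z z| ≤ K * (|pdt w p| + 2 * A) := by
    have : Y z z = -(b (p.2 z) * pdt w p) - ∑ j ∈ F, e j z * Y z j
        - ∑ j, ∑ k ∈ F, e j k * Y j k := by linarith
    rw [this]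
    have t1 := abs_sub (-(b (p.2 z) * pdt w p) - ∑ j ∈ F, e j z * Y z j)
      (∑ j, ∑ k ∈ F, e j k * Y j k)
    have t2 := abs_sub (-(b (p.2 z) * pdt w p)) (∑ j ∈ F, e j z * Y z j)
    rw [abs_neg] at t2
    linarith
  have hAS : A ^ 2 ≤ d * d * S := by
    have a1 := sq_sum_le_card_mul_sum_sq (s := (Finset.univ : Finset (Fin d)))
      (f := fun j => ∑ k ∈ F, |Y j k|)
    simp only [Finset.card_univ, Fintype.card_fin] at a1
    refine a1.trans ?_
    rw [mul_assoc]
    refine mul_le_mul_of_nonneg_left ?_ (Nat.cast_nonneg _)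
    rw [hS, Finset.mul_sum]
    refine Finset.sum_le_sum fun j _ => ?_
    refine sq_sum_le_card_mul_sum_sq.trans ?_
    simp only [sq_abs]
    refine mul_le_mul_of_nonneg_right ?_ (Finset.sum_nonneg fun k _ => sq_nonneg _)
    have := Finset.card_le_univ F
    simp only [Fintype.card_fin] at this
    exact_mod_cast this
  have hS0 : 0 ≤ S := Finset.sum_nonneg fun j _ => Finset.sum_nonneg fun k _ => sq_nonneg _
  have hA00 : 0 ≤ A := Finset.sum_nonneg fun j _ => hA0 j
  change Y z z ^ 2 ≤ _
  calc Y z z ^ 2 = |Y z z| ^ 2 := (sq_abs _).symm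
    _ ≤ (K * (|pdt w p| + 2 * A)) ^ 2 := by gcongr
    _ = K ^ 2 * (|pdt w p| + 2 * A) ^ 2 := by ring
    _ ≤ K ^ 2 * (8 * (1 + d * d) * (pdt w p ^ 2 + S)) := by
        refine mul_le_mul_of_nonneg_left ?_ (by positivity)
        have : (|pdt w p| + 2 * A) ^ 2 ≤ 2 * |pdt w p| ^ 2 + 8 * A ^ 2 := by
          nlinarith [sq_nonneg (|pdt w p| - 2 * A)]
        rw [sq_abs] at this
        have p1 : 0 ≤ (d : ℝ) * d * pdt w p ^ 2 := by positivity
        nlinarith [sq_nonneg (pdt w p)]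
    _ = _ := by ring

lemma slice_bd2 (z : Fin d) {K M r : ℝ} (hK : 1 ≤ K) (hM : 0 ≤ M) {ζ : E d → ℝ} (hζ : Cut ζ r M)
    (m : ℕ) :
    ∃ C : ℝ, 0 ≤ C ∧ ∀ b c, Coef z K b c → ∀ U : Set (E d), IsOpen U →
      (∀ p : E d, 0 ≤ p.1 → ‖p‖ ≤ r → p ∈ U) → ∀ H, Sol z b c U H → ∀ w, Der z H m w →
      JJ ζ (2 * m + 7) w ≤ C * II ζ 1 H ∧ JJ ζ (2 * m + 7) (pdx z w) ≤ C * II ζ 1 H ∧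
      JJ ζ (2 * m + 7) (pdx z (pdx z w)) ≤ C * II ζ 1 H := by
  obtain ⟨C0, hC0, H0⟩ := slice_bd z hK hM hζ m
  obtain ⟨C1, hC1, H1⟩ := slice_bd z hK hM hζ (m + 1)
  obtain ⟨C2, hC2, H2⟩ := slice_bd z hK hM hζ (m + 2)
  set D := 8 * K ^ 2 * (1 + (d : ℝ) * d) with hD
  have hD0 : 0 ≤ D := by positivity
  have hq : 0 ≤ D * (C1 + d * d * (C1 + C2)) := by positivity
  refine ⟨C0 + D * (C1 + d * d * (C1 + C2)), by positivity, ?_⟩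
  intro b c hco U hUo hU H hH w hw
  have hU' : ∀ p : E d, 0 < p.1 → ‖p‖ ≤ r → p ∈ U := fun p h => hU p h.le
  have hws := hw.sol hUo hH
  have hI : 0 ≤ II ζ 1 H := II_nonneg
  have hqI := mul_nonneg hq hI
  have hcI := mul_nonneg hC0 hI
  obtain ⟨a1, a2⟩ := H0 b c hco U hUo hU' H hH w hw
  refine ⟨?_, ?_, ?_⟩
  · have := JJ_anti hζ (n := 2 * m + 3) (m := 2 * m + 7) (by omega) (by omega) hws.sm
    linarith
  · have := JJ_anti hζ (n := 2 * m + 3) (m := 2 * m + 7) (by omega) (by omega) (Sm.pdx hws.sm z)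
    linarith
  have bt : JJ ζ (2 * m + 7) (pdt w) ≤ C1 * II ζ 1 H :=
    (JJ_anti hζ (n := 2 * (m + 1) + 3) (by omega) (by omega) (Sm.pdt hws.sm)).trans
      (H1 b c hco U hUo hU' H hH _ (Der.dt hw)).1
  have bx : ∀ j k, k ≠ z → JJ ζ (2 * m + 7) (pdxx j k w) ≤ (C1 + C2) * II ζ 1 H := by
    intro j k hk
    have sm := Sm.pdx (Sm.pdx hws.sm k) j
    have p1 := mul_nonneg hC1 hI
    have p2 := mul_nonneg hC2 hI
    by_cases hj : j = z
    · subst hj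
      have := (H1 b c hco U hUo hU' H hH _ (Der.dx hk hw)).2
      have := (JJ_anti hζ (n := 2 * (m + 1) + 3) (m := 2 * m + 7) (by omega) (by omega) sm).trans this
      change JJ ζ (2 * m + 7) (pdxx _ k w) ≤ _ at this
      linarith
    · have := (H2 b c hco U hUo hU' H hH _ (Der.dx hj (Der.dx hk hw))).1
      have := (JJ_anti hζ (n := 2 * (m + 2) + 3) (m := 2 * m + 7) (by omega) (by omega) sm).trans this
      change JJ ζ (2 * m + 7) (pdxx j k w) ≤ _ at this
      linarith
  set n := 2 * m + 7 with hn
  have hn0 : n ≠ 0 := by omega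
  have hti := JJ_int hζ hn0 (Sm.pdt hws.sm)
  have hxi : ∀ j k, Integrable (fun x : Fin d → ℝ =>
      ζ (0, x) ^ (2 * n) * pdxx j k w (0, x) ^ 2) :=
    fun j k => JJ_int hζ hn0 (Sm.pdx (Sm.pdx hws.sm k) j)
  have hSi : Integrable (fun x : Fin d → ℝ => ∑ j, ∑ k ∈ Finset.univ.filter (· ≠ z),
      ζ (0, x) ^ (2 * n) * pdxx j k w (0, x) ^ 2) :=
    integrable_finsetSum _ fun j _ => integrable_finsetSum _ fun k _ => hxi j k
  have hmono : JJ ζ n (pdx z (pdx z w)) ≤ ∫ x : Fin d → ℝ, D * (ζ (0, x) ^ (2 * n) * pdt w (0, x) ^ 2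
      + ∑ j, ∑ k ∈ Finset.univ.filter (· ≠ z), ζ (0, x) ^ (2 * n) * pdxx j k w (0, x) ^ 2) := by
    refine integral_mono (hxi z z) ((hti.add hSi).const_mul D) fun x => ?_
    by_cases hx : ζ (0, x) = 0
    · simp [hx, hn0]
    · have := zz_pt hK hco hws (hU (0, x) le_rfl (hζ.supp _ hx))
      have h2 := mul_le_mul_of_nonneg_left this
        (show 0 ≤ ζ (0, x) ^ (2 * n) by rw [pow_mul]; positivity)
      refine h2.trans (le_of_eq ?_)
      simp only [← Finset.mul_sum]
      ring
  have eS : ∫ x : Fin d → ℝ, (∑ j, ∑ k ∈ Finset.univ.filter (· ≠ z),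
      ζ (0, x) ^ (2 * n) * pdxx j k w (0, x) ^ 2)
      = ∑ j, ∑ k ∈ Finset.univ.filter (· ≠ z), JJ ζ n (pdxx j k w) := by
    rw [integral_finsetSum _ fun j _ => integrable_finsetSum _ fun k _ => hxi j k]
    refine Finset.sum_congr rfl fun j _ => ?_
    rw [integral_finsetSum _ fun k _ => hxi j k]
    rfl
  rw [integral_const_mul, integral_add hti hSi, eS] at hmono
  have hsum : ∑ j, ∑ k ∈ Finset.univ.filter (· ≠ z), JJ ζ n (pdxx j k w) ≤
      ∑ j : Fin d, ∑ k : Fin d, (C1 + C2) * II ζ 1 H := by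
    refine Finset.sum_le_sum fun j _ => ?_
    refine (Finset.sum_le_sum fun k hk => bx j k (Finset.mem_filter.1 hk).2).trans ?_
    exact Finset.sum_le_sum_of_subset_of_nonneg (Finset.filter_subset _ _)
      fun _ _ _ => by positivity
  simp only [Finset.sum_const, Finset.card_univ, Fintype.card_fin, nsmul_eq_mul] at hsum
  have := mul_le_mul_of_nonneg_left (add_le_add bt hsum) hD0
  change _ ≤ D * (JJ ζ n (pdt w) + _) at hmono
  have := hmono.trans this
  linarith

lemma point1 (z : Fin d) {K M r : ℝ} (hK : 1 ≤ K) (hr : 0 < r) {ζ : E d → ℝ} (hζ : Cut ζ r M) :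
    ∃ N : ℕ → ℝ, (∀ m, 0 ≤ N m) ∧ ∀ b c, Coef z K b c → ∀ U : Set (E d), IsOpen U →
      (∀ p : E d, 0 ≤ p.1 → ‖p‖ ≤ r → p ∈ U) → ∀ H, Sol z b c U H → ∀ m w, Der z H m w →
      w 0 ^ 2 ≤ N m * II ζ 1 H ∧ pdx z w 0 ^ 2 ≤ N m * II ζ 1 H := by
  have hM : 0 ≤ M := (abs_nonneg _).trans (hζ.bt 0)
  choose Cm hCm hb using slice_bd2 z hK hM hζ
  have hρ : 0 < r / 2 := by positivity
  refine ⟨GG ((1 + r / 2) / (r / 2)) Cm (Finset.univ.erase z).card,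
    fun m => GG_nonneg (by positivity) hCm _ m, ?_⟩
  intro b c hco U hUo hU H hH m w hw
  have hI : 0 ≤ II ζ 1 H := II_nonneg
  have := sobind (z := z) (ρ := r / 2) (I := II ζ 1 H) (H := H) (Cm := Cm) hρ hI hCm
    (fun m w hw => (hw.sol hUo hH).sm)
    (fun m w hw => by
      have hs := (hw.sol hUo hH).sm
      obtain ⟨h1, h2, h3⟩ := hb m b c hco U hUo hU H hH w hw
      exact ⟨(LL_univ hζ le_rfl hρ.le hs (by omega)).trans (ENNReal.ofReal_le_ofReal h1),
        (LL_univ hζ le_rfl hρ.le (Sm.pdx hs z) (by omega)).trans (ENNReal.ofReal_le_ofReal h2),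
        (LL_univ hζ le_rfl hρ.le (Sm.pdx (Sm.pdx hs z) z) (by omega)).trans
          (ENNReal.ofReal_le_ofReal h3)⟩)
    (Finset.univ.erase z) (by simp) m w hw
  have e : (insert z (Finset.univ.erase z))ᶜ = (∅ : Finset (Fin d)) := by
    rw [Finset.insert_erase (Finset.mem_univ z)]; simp
  have g0 := mul_nonneg (GG_nonneg (C0 := (1 + r / 2) / (r / 2)) (by positivity) hCm
    (Finset.univ.erase z).card m) hI
  rw [e, LL_empty hρ.le, LL_empty hρ.le, ENNReal.ofReal_le_ofReal_iff g0,
    ENNReal.ofReal_le_ofReal_iff g0] at this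
  exact this

lemma point2 (z : Fin d) {K M r : ℝ} (hK : 1 ≤ K) (hr : 0 < r) {ζ : E d → ℝ} (hζ : Cut ζ r M) :
    ∃ N : ℕ → ℝ, (∀ m, 0 ≤ N m) ∧ ∀ b c, Coef z K b c → ∀ U : Set (E d), IsOpen U →
      (∀ p : E d, 0 ≤ p.1 → ‖p‖ ≤ r → p ∈ U) → ∀ H, Sol z b c U H → ∀ m w, Der z H m w →
      w 0 ^ 2 ≤ N m * II ζ 1 H ∧ pdx z w 0 ^ 2 ≤ N m * II ζ 1 H ∧
      pdx z (pdx z w) 0 ^ 2 ≤ N m * II ζ 1 H := by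
  obtain ⟨N, hN, h⟩ := point1 z hK hr hζ
  set D := 8 * K ^ 2 * (1 + (d : ℝ) * d) with hD
  have hD0 : 0 ≤ D := by positivity
  have hq : ∀ m, 0 ≤ D * (N (m + 1) + d * d * (N (m + 1) + N (m + 2))) := fun m => by
    have := hN (m + 1)
    have := hN (m + 2)
    positivity
  refine ⟨fun m => N m + D * (N (m + 1) + d * d * (N (m + 1) + N (m + 2))), fun m =>
    add_nonneg (hN m) (hq m), ?_⟩
  intro b c hco U hUo hU H hH m w hw
  have hI : 0 ≤ II ζ 1 H := II_nonneg
  have hqI := mul_nonneg (hq m) hI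
  have hcI := mul_nonneg (hN m) hI
  have hx := h b c hco U hUo hU H hH
  obtain ⟨a1, a2⟩ := hx m w hw
  refine ⟨by simp only; linarith, by simp only; linarith, ?_⟩
  have hzz := zz_pt hK hco (hw.sol hUo hH) (hU 0 le_rfl (by simpa using hr.le))
  have p1 := mul_nonneg (hN (m + 1)) hI
  have p2 := mul_nonneg (hN (m + 2)) hI
  have bt := (hx _ _ (Der.dt hw)).1
  have bx : ∀ j k, k ≠ z → pdxx j k w 0 ^ 2 ≤ (N (m + 1) + N (m + 2)) * II ζ 1 H := by
    intro j k hk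
    by_cases hj : j = z
    · subst hj
      have := (hx _ _ (Der.dx hk hw)).2
      change pdxx _ k w 0 ^ 2 ≤ _ at this
      linarith
    · have := (hx _ _ (Der.dx hj (Der.dx hk hw))).1
      change pdxx j k w 0 ^ 2 ≤ _ at this
      change _ ≤ N (m + 2) * _ at this
      linarith
  have hsum : ∑ j, ∑ k ∈ Finset.univ.filter (· ≠ z), pdxx j k w 0 ^ 2 ≤
      ∑ j : Fin d, ∑ k : Fin d, (N (m + 1) + N (m + 2)) * II ζ 1 H := by
    refine Finset.sum_le_sum fun j _ => ?_
    refine (Finset.sum_le_sum fun k hk => bx j k (Finset.mem_filter.1 hk).2).trans ?_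
    exact Finset.sum_le_sum_of_subset_of_nonneg (Finset.filter_subset _ _)
      fun _ _ _ => by linarith
  simp only [Finset.sum_const, Finset.card_univ, Fintype.card_fin, nsmul_eq_mul] at hsum
  have := mul_le_mul_of_nonneg_left (add_le_add bt hsum) hD0
  have := hzz.trans this
  simp only
  linarith

end Core

namespace Core
variable {d : ℕ}

lemma coef_of (z : Fin d) {δ : ℝ} (hδ : δ ∈ Set.Ioo (0 : ℝ) 1) {a : ℝ → Fin d → Fin d → ℝ}
    (hm : ∀ j k, Measurable fun s => a s j k) (hsym : ∀ s j k, a s j k = a s k j)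
    (hell : ∀ (s : ℝ) (θ : Fin d → ℝ),
          δ * ∑ j, (θ j) ^ 2 ≤ ∑ j, ∑ k, a s j k * θ j * θ k ∧
          ∑ j, ∑ k, a s j k * θ j * θ k ≤ δ⁻¹ * ∑ j, (θ j) ^ 2) (σ : ℝ) :
    Coef z (δ⁻¹ ^ 2) (fun s => (a (s + σ) z z)⁻¹)
      (fun s j k => (a (s + σ) z z)⁻¹ * a (s + σ) j k) := by
  obtain ⟨h0, h1⟩ := hδ
  have hi : 1 ≤ δ⁻¹ := (one_le_inv₀ h0).2 h1.le
  have diag : ∀ s j, δ ≤ a s j j ∧ a s j j ≤ δ⁻¹ := by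
    intro s j
    have := hell s (Pi.single j 1)
    simpa [Pi.single_apply, ite_pow] using this
  have off : ∀ s j k, |a s j k| ≤ δ⁻¹ := by
    intro s j k
    by_cases hjk : j = k
    · subst hjk
      rw [abs_of_pos (h0.trans_le (diag s j).1)]
      exact (diag s j).2
    have ex : ∀ t : ℝ, t ^ 2 = 1 → a s j j + a s k k + 2 * t * a s j k ≤ 2 * δ⁻¹ := by
      intro t ht
      have := (hell s (fun i => (Pi.single j (1:ℝ) : Fin d → ℝ) i + t * (Pi.single k (1:ℝ) : Fin d → ℝ) i)).2
      have e1 : ∑ i, ((Pi.single j (1:ℝ) : Fin d → ℝ) i + t * (Pi.single k (1:ℝ) : Fin d → ℝ) i) ^ 2 = 2 := by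
        have : ∀ i, ((Pi.single j (1:ℝ) : Fin d → ℝ) i + t * (Pi.single k (1:ℝ) : Fin d → ℝ) i) ^ 2
            = (Pi.single j (1:ℝ) : Fin d → ℝ) i + (Pi.single k (1:ℝ) : Fin d → ℝ) i := by
          intro i
          by_cases hij : i = j
          · subst hij; simp [hjk]
          · by_cases hik : i = k
            · subst hik; simp [hij, ht]
            · simp [hij, hik]
        simp only [this, Finset.sum_add_distrib]
        simp; norm_num
      have e2 : ∑ i, ∑ l, a s i l * ((Pi.single j (1:ℝ) : Fin d → ℝ) i + t * (Pi.single k (1:ℝ) : Fin d → ℝ) i)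
          * ((Pi.single j (1:ℝ) : Fin d → ℝ) l + t * (Pi.single k (1:ℝ) : Fin d → ℝ) l)
          = a s j j + t * a s j k + t * a s k j + t ^ 2 * a s k k := by
        simp only [mul_add, add_mul, Finset.sum_add_distrib, Pi.single_apply]
        simp
        ring
      rw [e1, e2, ht, hsym s k j] at this
      linarith
    have a1 := ex 1 (by norm_num)
    have a2 := ex (-1) (by norm_num)
    have d1 := (diag s j).1
    have d2 := (diag s k).1
    rw [abs_le]
    constructor <;> linarith
  have bi : ∀ s, 0 < (a s z z)⁻¹ ∧ (a s z z)⁻¹ ≤ δ⁻¹ ∧ δ ≤ (a s z z)⁻¹ := by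
    intro s
    obtain ⟨d1, d2⟩ := diag s z
    have hp : 0 < a s z z := h0.trans_le d1
    refine ⟨by positivity, inv_anti₀ h0 d1, ?_⟩
    have := inv_anti₀ hp d2
    rwa [inv_inv] at this
  have hma : ∀ j k, Measurable fun s => a (s + σ) j k := fun j k =>
    (hm j k).comp (measurable_id.add_const σ)
  have hKK : (δ⁻¹ ^ 2)⁻¹ = δ ^ 2 := by rw [inv_pow, inv_inv]
  refine ⟨(hma z z).inv, fun j k => (hma z z).inv.mul (hma j k), ?_, ?_, ?_, ?_, ?_, ?_⟩
  · intro s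
    have := (bi (s + σ)).1
    exact inv_mul_cancel₀ (inv_pos.1 this).ne'
  · intro s j k
    rw [hsym (s + σ) j k]
  · intro s j k
    obtain ⟨b1, b2, _⟩ := bi (s + σ)
    rw [abs_mul, abs_of_pos b1, sq]
    exact mul_le_mul b2 (off _ _ _) (abs_nonneg _) (by positivity)
  · intro s
    obtain ⟨b1, b2, _⟩ := bi (s + σ)
    rw [abs_of_pos b1]
    nlinarith
  · intro s
    obtain ⟨b1, b2, b3⟩ := bi (s + σ)
    rw [hKK]
    nlinarith
  · intro s θ
    obtain ⟨b1, b2, b3⟩ := bi (s + σ)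
    rw [hKK]
    have e := (hell (s + σ) θ).1
    have e2 : ∑ j, ∑ k, (a (s + σ) z z)⁻¹ * a (s + σ) j k * θ j * θ k
        = (a (s + σ) z z)⁻¹ * ∑ j, ∑ k, a (s + σ) j k * θ j * θ k := by
      simp only [Finset.mul_sum, mul_assoc]
    rw [e2]
    have hS : 0 ≤ ∑ j, θ j ^ 2 := Finset.sum_nonneg fun _ _ => sq_nonneg _
    calc δ ^ 2 * ∑ j, θ j ^ 2 = δ * (δ * ∑ j, θ j ^ 2) := by ring
      _ ≤ (a (s + σ) z z)⁻¹ * (δ * ∑ j, θ j ^ 2) :=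
        mul_le_mul_of_nonneg_right b3 (by positivity)
      _ ≤ _ := mul_le_mul_of_nonneg_left e b1.le

lemma pd_tr {f F : E d → ℝ} {p p0 : E d} (v : E d) (h : F =ᶠ[nhds p] fun q => f (q + p0)) :
    pd v F =ᶠ[nhds p] fun q => pd v f (q + p0) := by
  have := pd_congr v h
  refine this.trans (Filter.Eventually.of_forall fun q => ?_)
  show fderiv ℝ (fun q => f (q + p0)) q v = fderiv ℝ f (q + p0) v
  rw [fderiv_comp_add_right]

lemma open_Qc (ρ : ℝ) : IsOpen (Qc d ρ) := by
  refine isOpen_Ioo.prod ?_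
  unfold ballE
  exact isOpen_lt (by fun_prop) continuous_const

lemma shift_mem (hd : 2 ≤ d) {p0 : E d} (hp0 : p0 ∈ Qc d 1) {p : E d}
    (h1 : 0 < p.1 + p0.1) (h2 : p.1 ≤ 1) (h3 : ‖p.2‖ ≤ 1 / (2 * d)) : p + p0 ∈ Qc d 3 := by
  obtain ⟨⟨t0, t1⟩, hx⟩ := hp0
  have hd' : (2:ℝ) ≤ d := by exact_mod_cast hd
  refine ⟨⟨by simpa using h1, ?_⟩, ?_⟩
  · simp only [Prod.fst_add]
    norm_num at t1 ⊢
    linarith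
  · simp only [ballE, Set.mem_ofPred_eq, Prod.snd_add, Pi.add_apply] at hx ⊢
    have hb : ∀ j, (p.2 j) ^ 2 ≤ (1 / (2 * d) : ℝ) ^ 2 := by
      intro j
      have := (norm_le_pi_norm p.2 j).trans h3
      rw [Real.norm_eq_abs] at this
      rw [← sq_abs]
      gcongr
    have hs : ∑ j, (p.2 j) ^ 2 ≤ d * (1 / (2 * d) : ℝ) ^ 2 := by
      refine (Finset.sum_le_sum fun j _ => hb j).trans ?_
      simp
    have hs2 : d * (1 / (2 * d) : ℝ) ^ 2 ≤ 1 := by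
      have e : d * (1 / (2 * d) : ℝ) ^ 2 = 1 / (4 * d) := by field_simp; norm_num
      rw [e, div_le_one (by positivity)]
      linarith
    have : ∑ j, (p.2 j + p0.2 j) ^ 2 ≤ 2 * ∑ j, p.2 j ^ 2 + 2 * ∑ j, p0.2 j ^ 2 := by
      rw [Finset.mul_sum, Finset.mul_sum, ← Finset.sum_add_distrib]
      refine Finset.sum_le_sum fun j _ => ?_
      nlinarith [sq_nonneg (p.2 j - p0.2 j)]
    linarith

lemma Qc_mono : Qc d 3 ⊆ Qc d 4 := by
  rintro p ⟨⟨h1, h2⟩, h3⟩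
  simp only [ballE, Set.mem_ofPred_eq] at h3
  refine ⟨⟨h1, by linarith⟩, ?_⟩
  simp only [ballE, Set.mem_ofPred_eq]
  linarith

lemma localize (hd : 2 ≤ d) {h : E d → ℝ}
    (hh : ContDiffOn ℝ (⊤ : ℕ∞) h (Qc d 4)) {p0 : E d} (hp0 : p0 ∈ Qc d 1) :
    ∃ (U : Set (E d)) (H : E d → ℝ), IsOpen U ∧ Sm H ∧
      (∀ p : E d, 0 ≤ p.1 → ‖p‖ ≤ 1 / (4 * d : ℝ) → p ∈ U) ∧
      (∀ p ∈ U, p + p0 ∈ Qc d 3) ∧ (∀ p ∈ U, H p = h (p + p0)) := by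
  have hd' : (2:ℝ) ≤ d := by exact_mod_cast hd
  set r : ℝ := 1 / (4 * d : ℝ) with hr
  have hr0 : 0 < r := by positivity
  have hr1 : r ≤ 1 / 8 := by
    rw [hr]; apply one_div_le_one_div_of_le <;> linarith
  have hr2 : 1 / (2 * d : ℝ) = 2 * r := by rw [hr]; field_simp; norm_num
  have ht0 : 0 < p0.1 := hp0.1.1
  set ε := min (p0.1 / 4) (r / 2) with hε
  have hε0 : 0 < ε := by positivity
  have hε1 : ε ≤ p0.1 / 4 := min_le_left _ _
  have hε2 : ε ≤ r / 2 := min_le_right _ _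
  let χ : ContDiffBump ((r, 0) : E d) := ⟨r + ε, r + 2 * ε, by positivity, by linarith⟩
  have hball : ∀ (p : E d) (s : ℝ), dist p ((r, 0) : E d) ≤ s → r - s ≤ p.1 ∧ p.1 ≤ r + s ∧ ‖p.2‖ ≤ s := by
    intro p s h
    rw [Prod.dist_eq] at h
    have h1 := (le_max_left _ _).trans h
    have h2 := (le_max_right _ _).trans h
    rw [Real.dist_eq, abs_le] at h1
    simp only [dist_zero_right] at h2
    exact ⟨by linarith, by linarith, h2⟩
  have hsh : ∀ p : E d, dist p ((r, 0) : E d) ≤ r + 2 * ε → p + p0 ∈ Qc d 3 := by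
    intro p hp
    obtain ⟨a1, a2, a3⟩ := hball p _ hp
    refine shift_mem hd hp0 (by linarith) (by linarith) ?_
    rw [hr2]; linarith
  refine ⟨Metric.ball ((r, 0) : E d) (r + ε), fun p => χ p * h (p + p0), Metric.isOpen_ball,
    ?_, ?_, ?_, ?_⟩
  · refine contDiff_iff_contDiffAt.2 fun p => ?_
    by_cases hp1 : p ∈ tsupport χ
    swap
    · have hz : (fun p => χ p * h (p + p0)) =ᶠ[nhds p] fun _ => 0 := by
        filter_upwards [notMem_tsupport_iff_eventuallyEq.1 hp1] with q hq
        simp [hq]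
      exact contDiffAt_const.congr_of_eventuallyEq hz
    rw [χ.tsupport_eq] at hp1
    have hq := Qc_mono (hsh p hp1)
    have h1 : ContDiffAt ℝ ((⊤ : ℕ∞) : WithTop ℕ∞) h (p + p0) :=
      hh.contDiffAt ((open_Qc 4).mem_nhds hq)
    have h2 : ContDiffAt ℝ ((⊤ : ℕ∞) : WithTop ℕ∞) (fun q => h (q + p0)) p :=
      h1.comp p (by fun_prop)
    exact χ.contDiffAt.mul h2
  · intro p h0 hp
    rw [Metric.mem_ball, Prod.dist_eq]
    have h1 := (norm_fst_le p).trans hp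
    have h2 := (norm_snd_le p).trans hp
    rw [Real.norm_eq_abs, abs_le] at h1
    refine max_lt ?_ ?_
    · rw [Real.dist_eq, abs_lt]
      constructor <;> simp only <;> linarith
    · simp only [dist_zero_right]; linarith
  · intro p hp
    refine hsh p ?_
    have := (Metric.mem_ball.1 hp).le
    linarith
  · intro p hp
    have : χ p = 1 := χ.one_of_mem_closedBall (Metric.ball_subset_closedBall hp)
    simp [this]

lemma II_le {ζ : E d → ℝ} {r M : ℝ} (hζ : Cut ζ r M) {h H : E d → ℝ} {U : Set (E d)} {p0 : E d}
    (hH : Sm H) (hU : ∀ p : E d, 0 ≤ p.1 → ‖p‖ ≤ r → p ∈ U)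
    (h3 : ∀ p ∈ U, p + p0 ∈ Qc d 3) (he : ∀ p ∈ U, H p = h (p + p0))
    (hi : IntegrableOn (fun p => (h p) ^ 2) (Qc d 4)) :
    II ζ 1 H ≤ ∫ p in Qc d 3, (h p) ^ 2 := by
  have hms : MeasurableSet (Qc d 3) := (open_Qc 3).measurableSet
  have hi3 : Integrable ((Qc d 3).indicator fun p => (h p) ^ 2) :=
    (integrable_indicator_iff hms).2 (hi.mono_set Qc_mono)
  have hinv : (volume : Measure (E d)).IsAddRightInvariant := by
    have : (volume : Measure (E d)).IsAddHaarMeasure := by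
      rw [Measure.volume_eq_prod]; infer_instance
    infer_instance
  have hit : Integrable (fun p => (Qc d 3).indicator (fun p => (h p) ^ 2) (p + p0)) :=
    hi3.comp_add_right p0
  rw [← integral_indicator hms, ← integral_add_right_eq_self _ p0]
  have hnn : ∀ p, 0 ≤ (Qc d 3).indicator (fun p => (h p) ^ 2) (p + p0) := fun p =>
    Set.indicator_nonneg (fun _ _ => sq_nonneg _) _
  refine le_trans ?_ (setIntegral_le_integral (s := Dm d) hit (Filter.Eventually.of_forall hnn))
  refine setIntegral_mono_on (II_int hζ one_ne_zero hH).integrableOn hit.integrableOn meas_Dm ?_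
  intro p hp
  by_cases hz : ζ p = 0
  · simp only [hz]
    simpa using hnn p
  · have hpU := hU p (le_of_lt hp.1) (hζ.supp p hz)
    rw [Set.indicator_of_mem (h3 p hpU), ← he p hpU]
    exact mul_le_of_le_one_left (sq_nonneg _) (pow_le_one₀ (hζ.nn p) (hζ.le1 p))

lemma terms {z : Fin d} {H : E d → ℝ} (hH : Sm H) {N : ℕ → ℝ} {I : ℝ} (hN : ∀ m, 0 ≤ N m)
    (hI : 0 ≤ I) (hb : ∀ m w, Der z H m w →
      w 0 ^ 2 ≤ N m * I ∧ pdx z w 0 ^ 2 ≤ N m * I ∧ pdx z (pdx z w) 0 ^ 2 ≤ N m * I) :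
    pdt (pdt H) 0 ^ 2 ≤ (N 1 + N 2 + N 3) * I ∧
    (∀ j, pdx j (pdt H) 0 ^ 2 ≤ (N 1 + N 2 + N 3) * I) ∧
    (∀ j k, k ≠ z → pdxx j k (pdt H) 0 ^ 2 ≤ (N 1 + N 2 + N 3) * I) ∧
    (∀ i j k, k ≠ z → pdx i (pdxx j k H) 0 ^ 2 ≤ (N 1 + N 2 + N 3) * I) := by
  have n1 := mul_nonneg (hN 1) hI
  have n2 := mul_nonneg (hN 2) hI
  have n3 := mul_nonneg (hN 3) hI
  have u1 : N 1 * I ≤ (N 1 + N 2 + N 3) * I := by linarith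
  have u2 : N 2 * I ≤ (N 1 + N 2 + N 3) * I := by linarith
  have u3 : N 3 * I ≤ (N 1 + N 2 + N 3) * I := by linarith
  have dt1 : Der z H 1 (pdt H) := Der.dt Der.zero
  refine ⟨(hb 2 _ (Der.dt dt1)).1.trans u2, ?_, ?_, ?_⟩
  · intro j
    by_cases hj : j = z
    · rw [hj]; exact (hb 1 _ dt1).2.1.trans u1
    · exact (hb 2 _ (Der.dx hj dt1)).1.trans u2
  · intro j k hk
    have dk : Der z H 2 (pdx k (pdt H)) := Der.dx hk dt1
    unfold pdxx
    by_cases hj : j = z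
    · rw [hj]; exact (hb 2 _ dk).2.1.trans u2
    · exact (hb 3 _ (Der.dx hj dk)).1.trans u3
  · intro i j k hk
    have dk : Der z H 1 (pdx k H) := Der.dx hk Der.zero
    unfold pdxx
    by_cases hj : j = z
    · by_cases hi : i = z
      · rw [hi, hj]; exact (hb 1 _ dk).2.2.trans u1
      · have : pdx i (pdx j (pdx k H)) = pdx j (pdx i (pdx k H)) := pd_comm (Sm.pdx hH k) _ _
        rw [this, hj]
        exact (hb 2 _ (Der.dx hi dk)).2.1.trans u2
    · have dj : Der z H 2 (pdx j (pdx k H)) := Der.dx hj dk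
      by_cases hi : i = z
      · rw [hi]; exact (hb 2 _ dj).2.1.trans u2
      · exact (hb 3 _ (Der.dx hi dj)).1.trans u3

lemma pointwise (hd : 2 ≤ d) (z : Fin d) {δ : ℝ} (hδ : δ ∈ Set.Ioo (0 : ℝ) 1) :
    ∃ T : ℝ, 0 ≤ T ∧ ∀ a : ℝ → Fin d → Fin d → ℝ,
        (∀ j k, Measurable fun s => a s j k) →
        (∀ s j k, a s j k = a s k j) →
        (∀ (s : ℝ) (θ : Fin d → ℝ),
          δ * ∑ j, (θ j) ^ 2 ≤ ∑ j, ∑ k, a s j k * θ j * θ k ∧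
          ∑ j, ∑ k, a s j k * θ j * θ k ≤ δ⁻¹ * ∑ j, (θ j) ^ 2) →
        ∀ h : ℝ × (Fin d → ℝ) → ℝ,
          ContDiffOn ℝ (⊤ : ℕ∞) h (Qc d 4) →
          IntegrableOn (fun p => (h p) ^ 2) (Qc d 4) →
          (∀ p ∈ Qc d 4,
            pdt h p + ∑ j, ∑ k, a (p.2 z) j k * pdxx j k h p = 0) →
          ∀ p0 ∈ Qc d 1,
          pdt (pdt h) p0 ^ 2 ≤ T * (∫ p in Qc d 3, (h p) ^ 2) ∧
          (∀ j, pdx j (pdt h) p0 ^ 2 ≤ T * (∫ p in Qc d 3, (h p) ^ 2)) ∧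
          (∀ j k, k ≠ z → pdxx j k (pdt h) p0 ^ 2 ≤ T * (∫ p in Qc d 3, (h p) ^ 2)) ∧
          (∀ i j k, k ≠ z → pdx i (pdxx j k h) p0 ^ 2 ≤ T * (∫ p in Qc d 3, (h p) ^ 2)) := by
  have hd' : (2:ℝ) ≤ d := by exact_mod_cast hd
  have hr : 0 < 1 / (4 * d : ℝ) := by positivity
  have hK : 1 ≤ δ⁻¹ ^ 2 := one_le_pow₀ ((one_le_inv₀ hδ.1).2 hδ.2.le)
  obtain ⟨ζ, M, hζ⟩ := exists_cut d hr
  obtain ⟨N, hN, hb⟩ := point2 z hK hr hζ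
  refine ⟨N 1 + N 2 + N 3, add_nonneg (add_nonneg (hN 1) (hN 2)) (hN 3), ?_⟩
  intro a hm hsym hell h hh hi heq p0 hp0
  obtain ⟨U, H, hUo, hHs, hU, hU3, hUh⟩ := localize hd hh hp0
  have hco := coef_of z hδ hm hsym hell (p0.2 z)
  have hev : ∀ p ∈ U, H =ᶠ[nhds p] fun q => h (q + p0) := fun p hp =>
    Filter.eventually_of_mem (hUo.mem_nhds hp) hUh
  have hsol : Sol z (fun s => (a (s + p0.2 z) z z)⁻¹)
      (fun s j k => (a (s + p0.2 z) z z)⁻¹ * a (s + p0.2 z) j k) U H := by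
    refine ⟨hHs, fun p hp => ?_⟩
    have e1 : pdt H p = pdt h (p + p0) := (pd_tr _ (hev p hp)).eq_of_nhds
    have e2 : ∀ j k, pdxx j k H p = pdxx j k h (p + p0) := fun j k =>
      (pd_tr _ (pd_tr _ (hev p hp))).eq_of_nhds
    have := heq _ (Qc_mono (hU3 p hp))
    simp only [e1, e2, mul_assoc, ← Finset.mul_sum]
    rw [← mul_add]
    simp only [Prod.snd_add, Pi.add_apply] at this
    rw [this, mul_zero]
  have h0U : (0 : E d) ∈ U := hU 0 le_rfl (by simp)
  have h0 := hev 0 h0U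
  have hII := II_le hζ hHs hU hU3 hUh hi
  have hI : 0 ≤ II ζ 1 H := II_nonneg
  have ht := terms hHs hN (II_nonneg.trans hII) (z := z) (fun m w hw => by
    have := hb _ _ hco U hUo hU H hsol m w hw
    have hle := mul_le_mul_of_nonneg_left hII (hN m)
    exact ⟨this.1.trans hle, this.2.1.trans hle, this.2.2.trans hle⟩)
  have e1 : pdt (pdt H) 0 = pdt (pdt h) p0 := by
    have := (pd_tr (1, 0) (pd_tr (1, 0) h0)).eq_of_nhds
    rw [zero_add] at this; exact this
  have e2 : ∀ j, pdx j (pdt H) 0 = pdx j (pdt h) p0 := by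
    intro j
    have := (pd_tr (0, Pi.single j 1) (pd_tr (1, 0) h0)).eq_of_nhds
    rw [zero_add] at this; exact this
  have e3 : ∀ j k, pdxx j k (pdt H) 0 = pdxx j k (pdt h) p0 := by
    intro j k
    have := (pd_tr (0, Pi.single j 1) (pd_tr (0, Pi.single k 1) (pd_tr (1, 0) h0))).eq_of_nhds
    rw [zero_add] at this; exact this
  have e4 : ∀ i j k, pdx i (pdxx j k H) 0 = pdx i (pdxx j k h) p0 := by
    intro i j k
    have := (pd_tr (0, Pi.single i 1) (pd_tr (0, Pi.single j 1)
      (pd_tr (0, Pi.single k 1) h0))).eq_of_nhds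
    rw [zero_add] at this; exact this
  simpa only [e1, e2, e3, e4] using ht

end Core
theorem stmt9 (d : ℕ) (hd : 2 ≤ d) (δ : ℝ) (hδ : δ ∈ Set.Ioo (0 : ℝ) 1) :
    ∃ N : ℝ, 0 < N ∧
      ∀ a : ℝ → Fin d → Fin d → ℝ,
        (∀ j k, Measurable fun s => a s j k) →
        (∀ s j k, a s j k = a s k j) →
        (∀ (s : ℝ) (θ : Fin d → ℝ),
          δ * ∑ j, (θ j) ^ 2 ≤ ∑ j, ∑ k, a s j k * θ j * θ k ∧
          ∑ j, ∑ k, a s j k * θ j * θ k ≤ δ⁻¹ * ∑ j, (θ j) ^ 2) →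
        ∀ h : ℝ × (Fin d → ℝ) → ℝ,
          ContDiffOn ℝ (⊤ : ℕ∞) h (Qc d 4) →
          IntegrableOn (fun p => (h p) ^ 2) (Qc d 4) →
          (∀ p ∈ Qc d 4,
            pdt h p + ∑ j, ∑ k, a (p.2 ⟨0, by omega⟩) j k * pdxx j k h p = 0) →
          (⨆ p ∈ Qc d 1, |pdt (pdt h) p|)
              + (∑ j, ⨆ p ∈ Qc d 1, |pdx j (pdt h) p|)
              + (∑ j, ∑ k ∈ Finset.univ.filter (fun k : Fin d => k.val ≠ 0),
                  ⨆ p ∈ Qc d 1, |pdxx j k (pdt h) p|)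
              + (∑ i, ∑ j, ∑ k ∈ Finset.univ.filter (fun k : Fin d => k.val ≠ 0),
                  ⨆ p ∈ Qc d 1, |pdx i (pdxx j k h) p|)
            ≤ N * Real.sqrt (∫ p in Qc d 3, (h p) ^ 2) := by
  obtain ⟨T, hT, hmain⟩ := Core.pointwise hd (⟨0, by omega⟩ : Fin d) hδ
  have hd0 : (0:ℝ) ≤ d := Nat.cast_nonneg _
  refine ⟨(1 + d + d * d + d * (d * d)) * (Real.sqrt T + 1), by positivity, ?_⟩
  intro a hm hsym hell h hh hi heq
  have hp := hmain a hm hsym hell h hh hi heq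
  set I := ∫ p in Qc d 3, (h p) ^ 2 with hI
  set X := (Real.sqrt T + 1) * Real.sqrt I with hX
  have hX0 : 0 ≤ X := by positivity
  have hab : ∀ x : ℝ, x ^ 2 ≤ T * I → |x| ≤ X := by
    intro x hx
    have h1 := Real.abs_le_sqrt hx
    rw [Real.sqrt_mul hT] at h1
    refine h1.trans ?_
    exact mul_le_mul_of_nonneg_right (by linarith) (Real.sqrt_nonneg _)
  have hsup : ∀ f : ℝ × (Fin d → ℝ) → ℝ, (∀ p ∈ Qc d 1, f p ^ 2 ≤ T * I) →
      (⨆ p ∈ Qc d 1, |f p|) ≤ X := by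
    intro f hf
    refine Real.iSup_le (fun p => Real.iSup_le (fun hq => hab _ (hf p hq)) hX0) hX0
  have hkz : ∀ k ∈ Finset.univ.filter (fun k : Fin d => k.val ≠ 0),
      k ≠ (⟨0, by omega⟩ : Fin d) := by
    intro k hk h0
    rw [h0] at hk
    simp at hk
  have hF : ∀ f : Fin d → ℝ, (∀ k ∈ Finset.univ.filter (fun k : Fin d => k.val ≠ 0), f k ≤ X) →
      ∑ k ∈ Finset.univ.filter (fun k : Fin d => k.val ≠ 0), f k ≤ d * X := by
    intro f hf
    refine (Finset.sum_le_sum hf).trans ?_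
    refine (Finset.sum_le_sum_of_subset_of_nonneg (Finset.filter_subset _ _)
      fun _ _ _ => hX0).trans ?_
    simp
  have hG : ∀ (f : Fin d → ℝ) (Y : ℝ), (∀ k, f k ≤ Y) → ∑ k, f k ≤ d * Y := by
    intro f Y hf
    refine (Finset.sum_le_sum fun k _ => hf k).trans ?_
    simp
  have t1 := hsup (pdt (pdt h)) fun p hq => (hp p hq).1
  have t2 := hG _ X fun j => hsup (pdx j (pdt h)) fun p hq => (hp p hq).2.1 j
  have t3 := hG _ (d * X) fun j => hF _ fun k hk => hsup (pdxx j k (pdt h))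
    fun p hq => (hp p hq).2.2.1 j k (hkz k hk)
  have t4 := hG _ (d * (d * X)) fun i => hG _ (d * X) fun j => hF _ fun k hk =>
    hsup (pdx i (pdxx j k h)) fun p hq => (hp p hq).2.2.2 i j k (hkz k hk)
  have := add_le_add (add_le_add (add_le_add t1 t2) t3) t4
  refine this.trans (le_of_eq ?_)
  rw [hX]
  ring
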